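/- G is a strong Riemannian metric on 𝓜: for every γ ∈ 𝓜, G_γ is a symmetric bilinear form on H^s(𝕋,ℝⁿ) and there exist constants 0 < c ≤ C < ∞ (depending on γ) such that c·‖u‖²_{H^s} ≤ G_γ(u,u) ≤ C·‖u‖²_{H^s} for all u ∈ H^s(𝕋,ℝⁿ). Consequently the Riesz map J_γ : H^s(𝕋,ℝⁿ) → H^s(𝕋,ℝⁿ)', defined by (J_γ u)(v) = G_γ(u,v), is an isomorphism of Banach spaces. -/

import Mathlib

open MeasureTheory Real Filter Set
open scoped ENNReal Topology RealInnerProductSpace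

noncomputable section

/-- Euclidean space `ℝⁿ`. -/
abbrev En (n : ℕ) : Type := EuclideanSpace ℝ (Fin n)

/-- A fundamental domain for the circle `𝕋 = ℝ/ℤ`. -/
def I01 : Set ℝ := Set.Ico (0 : ℝ) 1

/-- The intrinsic distance on `𝕋 = ℝ/ℤ`, expressed for real representatives. -/
def dT (x y : ℝ) : ℝ := ⨅ k : ℤ, |x - y - (k : ℝ)|

/-- Supremum norm of a (periodic) function on the circle. -/
def supNorm {E : Type*} [NormedAddCommGroup E] (f : ℝ → E) : ℝ := ⨆ x : ℝ, ‖f x‖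

/-- The squared Gagliardo seminorm `[v]_{H^σ}²` of a function on the circle, valued in `[0,∞]`. -/
def gagliardoSqE {E : Type*} [NormedAddCommGroup E] (σ : ℝ) (v : ℝ → E) : ℝ≥0∞ :=
  ∫⁻ x in I01, ∫⁻ y in I01, ENNReal.ofReal (‖v y - v x‖ ^ 2 / dT x y ^ (2 * σ + 1))

/-- Membership in the Sobolev–Slobodeckij space `H^s(𝕋, ℝⁿ)`; for `s ∈ (3/2,2)` such
functions have a `C¹` representative, which we take as the defining data. -/
def InHs {n : ℕ} (s : ℝ) (u : ℝ → En n) : Prop :=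
  Function.Periodic u 1 ∧ ContDiff ℝ 1 u ∧ gagliardoSqE (s - 1) (deriv u) < ⊤

/-- The squared `H^s` norm `‖u‖²_{L²} + ‖u'‖²_{L²} + [u']²_{H^{s-1}}`. -/
def HsNormSq {n : ℕ} (s : ℝ) (u : ℝ → En n) : ℝ :=
  (∫ x in I01, ‖u x‖ ^ 2) + (∫ x in I01, ‖deriv u x‖ ^ 2) +
    (gagliardoSqE (s - 1) (deriv u)).toReal

/-- The `H^s` norm. -/
def HsNorm {n : ℕ} (s : ℝ) (u : ℝ → En n) : ℝ := Real.sqrt (HsNormSq s u)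

/-- The `H^s` inner product. -/
def HsInner {n : ℕ} (s : ℝ) (u v : ℝ → En n) : ℝ :=
  (∫ x in I01, ⟪u x, v x⟫) + (∫ x in I01, ⟪deriv u x, deriv v x⟫) +
    ∫ x in I01, ∫ y in I01,
      ⟪deriv u y - deriv u x, deriv v y - deriv v x⟫ / dT x y ^ (2 * (s - 1) + 1)

/-- The manifold `𝓜` of embedded closed curves of class `H^s`: injective (on the circle)
immersions. -/
def InM {n : ℕ} (s : ℝ) (γ : ℝ → En n) : Prop :=
  InHs s γ ∧ Set.InjOn γ I01 ∧ ∀ x, deriv γ x ≠ 0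

/-- The length `L(γ)`. -/
def arcLen {n : ℕ} (γ : ℝ → En n) : ℝ := ∫ x in I01, ‖deriv γ x‖

/-- The arc-length distance `d_γ(x,y)`: the length of the shorter of the two arcs of `γ`
between `x` and `y`. -/
def arcDist {n : ℕ} (γ : ℝ → En n) (x y : ℝ) : ℝ :=
  ⨅ k : ℤ, |∫ t in x..(y + (k : ℝ)), ‖deriv γ t‖|

/-- Derivative with respect to arc length, `D_γ u = u' / |γ'|`. -/
def Dg {n : ℕ} (γ u : ℝ → En n) (x : ℝ) : En n := ‖deriv γ x‖⁻¹ • deriv u x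

/-- `𝒟_γ u (x)`, the pointwise linear map `w ↦ |γ'(x)|⁻² ⟪γ'(x), w⟫ u'(x)`. -/
def DDg {n : ℕ} (γ u : ℝ → En n) (x : ℝ) (w : En n) : En n :=
  ((‖deriv γ x‖ ^ 2)⁻¹ * ⟪deriv γ x, w⟫) • deriv u x

/-- The operator `R^s_γ`. -/
def Rop {n : ℕ} (s : ℝ) (γ u : ℝ → En n) (x y : ℝ) : En n :=
  (‖γ y - γ x‖ ^ s)⁻¹ • (u y - u x - DDg γ u x (γ y - γ x))

/-- Density of the measure `μ_γ` with respect to `λ ⊗ λ` on `𝕋 × 𝕋`. -/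
def muW {n : ℕ} (γ : ℝ → En n) (x y : ℝ) : ℝ :=
  ‖deriv γ x‖ * ‖deriv γ y‖ / ‖γ y - γ x‖

/-- Density of the measure `ν_γ` with respect to `λ ⊗ λ` on `𝕋 × 𝕋`. -/
def nuW {n : ℕ} (γ : ℝ → En n) (x y : ℝ) : ℝ :=
  ‖deriv γ x‖ * ‖deriv γ y‖ / arcDist γ x y

/-- The tangent-point energy, valued in `[0,∞]`. -/
def EtpE {n : ℕ} (s : ℝ) (γ : ℝ → En n) : ℝ≥0∞ :=
  ∫⁻ x in I01, ∫⁻ y in I01, ENNReal.ofReal (‖Rop s γ γ x y‖ ^ 2 * muW γ x y)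

/-- The tangent-point energy, real-valued (finite on `𝓜`). -/
def Etp {n : ℕ} (s : ℝ) (γ : ℝ → En n) : ℝ := (EtpE s γ).toReal

/-- `‖R^s_γ u‖²_{L²(ν_γ)}`, valued in `[0,∞]`. -/
def RnuSqE {n : ℕ} (s : ℝ) (γ u : ℝ → En n) : ℝ≥0∞ :=
  ∫⁻ x in I01, ∫⁻ y in I01, ENNReal.ofReal (‖Rop s γ u x y‖ ^ 2 * nuW γ x y)

/-- `‖R^s_γ u‖²_{L²(ν_γ)}`, real-valued. -/
def RnuSq {n : ℕ} (s : ℝ) (γ u : ℝ → En n) : ℝ := (RnuSqE s γ u).toReal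

/-- The squared `γ`-dependent seminorm `[u]²_{H^s(γ)}`, valued in `[0,∞]`. -/
def gagGammaSqE {n : ℕ} (s : ℝ) (γ u : ℝ → En n) : ℝ≥0∞ :=
  ∫⁻ x in I01, ∫⁻ y in I01,
    ENNReal.ofReal (‖Dg γ u y - Dg γ u x‖ ^ 2 / arcDist γ x y ^ (2 * (s - 1)) * nuW γ x y)

/-- The squared `γ`-dependent seminorm `[u]²_{H^s(γ)}`, real-valued. -/
def gagGammaSq {n : ℕ} (s : ℝ) (γ u : ℝ → En n) : ℝ := (gagGammaSqE s γ u).toReal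

/-- The inner product `⟨u,v⟩_{L²(γ)}`. -/
def innerL2g {n : ℕ} (γ u v : ℝ → En n) : ℝ := ∫ x in I01, ⟪u x, v x⟫ * ‖deriv γ x‖

/-- The inner product `⟨u,v⟩_{H¹(γ)}`. -/
def innerH1g {n : ℕ} (γ u v : ℝ → En n) : ℝ :=
  ∫ x in I01, ⟪Dg γ u x, Dg γ v x⟫ * ‖deriv γ x‖

/-- The squared `γ`-dependent norm `‖u‖²_{H^s(γ)}`. -/
def HsGammaNormSq {n : ℕ} (s : ℝ) (γ u : ℝ → En n) : ℝ :=
  innerL2g γ u u + innerH1g γ u u + gagGammaSq s γ u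

/-- The `γ`-dependent norm `‖u‖_{H^s(γ)}`. -/
def HsGammaNorm {n : ℕ} (s : ℝ) (γ u : ℝ → En n) : ℝ := Real.sqrt (HsGammaNormSq s γ u)

/-- The bilinear form `B¹_γ`. -/
def B1 {n : ℕ} (s : ℝ) (γ u v : ℝ → En n) : ℝ :=
  ∫ x in I01, ∫ y in I01, ⟪Rop s γ u x y, Rop s γ v x y⟫ * muW γ x y

/-- The bilinear form `B²_γ`. -/
def B2 {n : ℕ} (s : ℝ) (γ u v : ℝ → En n) : ℝ :=
  ∫ x in I01, ∫ y in I01,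
    ‖Rop s γ γ x y‖ ^ 2 * (⟪u y - u x, v y - v x⟫ / ‖γ y - γ x‖ ^ 2) * muW γ x y

/-- The bilinear form `B³_γ`. -/
def B3 {n : ℕ} (s : ℝ) (γ u v : ℝ → En n) : ℝ :=
  ∫ x in I01, ∫ y in I01,
    ‖Rop s γ γ x y‖ ^ 2 * (⟪Dg γ u x, Dg γ v x⟫ + ⟪Dg γ u y, Dg γ v y⟫) * muW γ x y

/-- The Riemannian metric `G_γ(u,v)`. -/
def Gmet {n : ℕ} (s : ℝ) (γ u v : ℝ → En n) : ℝ :=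
  2 * B1 s γ u v + (2 * s + 1) * B2 s γ u v + B3 s γ u v + innerH1g γ u v + innerL2g γ u v

/-- The distortion `distor(γ) = sup_{x ≠ y} d_γ(x,y)/|γ(y) − γ(x)|`, valued in `[0,∞]`. -/
def distorE {n : ℕ} (γ : ℝ → En n) : ℝ≥0∞ :=
  ⨆ (x ∈ I01) (y ∈ I01) (_ : x ≠ y), ENNReal.ofReal (arcDist γ x y / ‖γ y - γ x‖)

/-- The distortion, real-valued. -/
def distor {n : ℕ} (γ : ℝ → En n) : ℝ := (distorE γ).toReal

/-- A `C¹` path `[0,1] → 𝓜 ⊂ H^s(𝕋,ℝⁿ)` (with respect to the `H^s` topology), recorded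
together with its velocity field `V`. -/
structure C1Path (s : ℝ) (n : ℕ) where
  Γ : ℝ → ℝ → En n
  V : ℝ → ℝ → En n
  mem : ∀ t ∈ Set.Icc (0 : ℝ) 1, InM s (Γ t)
  memV : ∀ t ∈ Set.Icc (0 : ℝ) 1, InHs s (V t)
  isDeriv : ∀ t ∈ Set.Icc (0 : ℝ) 1,
    Tendsto (fun h : ℝ => HsNorm s fun x => h⁻¹ • (Γ (t + h) x - Γ t x) - V t x)
      (𝓝[{h : ℝ | t + h ∈ Set.Icc (0 : ℝ) 1 ∧ h ≠ 0}] 0) (𝓝 0)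
  contV : ∀ t ∈ Set.Icc (0 : ℝ) 1,
    Tendsto (fun τ : ℝ => HsNorm s fun x => V τ x - V t x) (𝓝[Set.Icc (0 : ℝ) 1] t) (𝓝 0)

/-- Length of a path with respect to `G`. -/
def pathLen {s : ℝ} {n : ℕ} (P : C1Path s n) : ℝ :=
  ∫ t in (0 : ℝ)..1, Real.sqrt (Gmet s (P.Γ t) (P.V t) (P.V t))

/-- The path (Dirichlet) energy of a path with respect to `G`. -/
def pathEnergy {s : ℝ} {n : ℕ} (P : C1Path s n) : ℝ :=
  (1 / 2) * ∫ t in (0 : ℝ)..1, Gmet s (P.Γ t) (P.V t) (P.V t)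

/-- The geodesic distance induced by `G`, valued in `[0,∞]` (`∞` if there is no path). -/
def geodDist (s : ℝ) {n : ℕ} (γ₀ γ₁ : ℝ → En n) : ℝ≥0∞ :=
  ⨅ (P : C1Path s n) (_ : P.Γ 0 = γ₀ ∧ P.Γ 1 = γ₁), ENNReal.ofReal (pathLen P)

/-- `U ⊆ 𝓜` is bounded with respect to the geodesic distance `d_G`. -/
def GBounded (s : ℝ) {n : ℕ} (U : Set (ℝ → En n)) : Prop :=
  (∀ γ ∈ U, InM s γ) ∧
    ∃ γ₀, InM s γ₀ ∧ ∃ R : ℝ, ∀ γ ∈ U, geodDist s γ γ₀ ≤ ENNReal.ofReal R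

/-- Weak convergence in the Hilbert space `H^s(𝕋,ℝⁿ)`. -/
def WeakHsTendsto {n : ℕ} (s : ℝ) (γk : ℕ → ℝ → En n) (γ : ℝ → En n) : Prop :=
  ∀ v : ℝ → En n, InHs s v →
    Tendsto (fun k => HsInner s (γk k) v) atTop (𝓝 (HsInner s γ v))

/-- Directional derivative of `γ ↦ G_γ(u,v)` at `γ` in direction `w`. -/
def DGdir {n : ℕ} (s : ℝ) (γ w u v : ℝ → En n) : ℝ :=
  deriv (fun t : ℝ => Gmet s (fun x => γ x + t • w x) u v) 0

/-- `F'` is the derivative of the path `F` with respect to the `H^s` norm, on `S`. -/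
def IsHsDerivOn {n : ℕ} (s : ℝ) (F F' : ℝ → ℝ → En n) (S : Set ℝ) : Prop :=
  ∀ t ∈ S,
    Tendsto (fun h : ℝ => HsNorm s fun x => h⁻¹ • (F (t + h) x - F t x) - F' t x)
      (𝓝[{h : ℝ | t + h ∈ S ∧ h ≠ 0}] 0) (𝓝 0)

/-- The path `F` is continuous on `S` with respect to the `H^s` norm. -/
def HsContOn {n : ℕ} (s : ℝ) (F : ℝ → ℝ → En n) (S : Set ℝ) : Prop :=
  ∀ t ∈ S, Tendsto (fun τ : ℝ => HsNorm s fun x => F τ x - F t x) (𝓝[S] t) (𝓝 0)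

/-- A solution of the geodesic initial value problem on `[0,∞)`, recorded as a triple
(position `Γ`, velocity `V`, acceleration `W`); the geodesic equation
`Γ̈ + A_Γ(Γ̇)Γ̇ = 0` is expressed weakly via the Koszul formula for the
Christoffel operator `A`. -/
def GeodesicSol {n : ℕ} (s : ℝ) (γ₀ v₀ : ℝ → En n) (Γ V W : ℝ → ℝ → En n) : Prop :=
  (∀ t ∈ Set.Ici (0 : ℝ), InM s (Γ t) ∧ InHs s (V t) ∧ InHs s (W t)) ∧
  Γ 0 = γ₀ ∧ V 0 = v₀ ∧
  IsHsDerivOn s Γ V (Set.Ici 0) ∧ IsHsDerivOn s V W (Set.Ici 0) ∧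
  HsContOn s V (Set.Ici 0) ∧ HsContOn s W (Set.Ici 0) ∧
  ∀ t ∈ Set.Ici (0 : ℝ), ∀ w : ℝ → En n, InHs s w →
    Gmet s (Γ t) (W t) w + DGdir s (Γ t) (V t) (V t) w
      - (1 / 2) * DGdir s (Γ t) w (V t) (V t) = 0

lemma dT_eq (x y : ℝ) : dT x y = |x - y - round (x - y)| := by
  unfold dT
  apply le_antisymm
  · exact ciInf_le ⟨0, by rintro _ ⟨k, rfl⟩; positivity⟩ (round (x - y))
  · exact le_ciInf fun k => round_le (x - y) k

lemma dT_nonneg (x y : ℝ) : 0 ≤ dT x y := by rw [dT_eq]; positivity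

lemma dT_le (x y : ℝ) : dT x y ≤ |x - y| := by
  rw [dT_eq]; simpa using round_le (x - y) 0

lemma dT_comm (x y : ℝ) : dT x y = dT y x := by
  have key : ∀ x y, dT x y ≤ dT y x := by
    intro x y
    rw [dT_eq, dT_eq y x]
    have := round_le (x - y) (-round (y - x))
    refine this.trans (le_of_eq ?_)
    rw [← abs_neg]; congr 1; push_cast; ring
  exact le_antisymm (key _ _) (key _ _)

lemma dT_add_one (x y : ℝ) : dT x (y + 1) = dT x y := by
  rw [dT_eq, dT_eq]
  have : x - (y + 1) = x - y - 1 := by ring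
  rw [this, round_sub_one]; congr 1; push_cast; ring

lemma dT_add (x h : ℝ) (hh : |h| ≤ 1 / 2) : dT x (x + h) = |h| := by
  apply le_antisymm
  · refine (dT_le _ _).trans ?_
    rw [← abs_neg]; simp
  · refine le_ciInf fun k => ?_
    have e : |x - (x + h) - (k : ℝ)| = |h + k| := by rw [← abs_neg]; congr 1; ring
    rw [e]
    rcases eq_or_ne k 0 with rfl | hk
    · simp
    · have : (1 : ℝ) ≤ |(k : ℝ)| := by
        exact_mod_cast Int.one_le_abs hk
      have h2 : |(k : ℝ)| ≤ |h + k| + |h| := by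
        have := abs_sub (h + k) h
        simpa using this
      linarith

lemma measurable_dT : Measurable (fun p : ℝ × ℝ => dT p.1 p.2) := by
  simp_rw [dT_eq]
  have : Measurable (fun t : ℝ => |t - round t|) := by
    have h1 : Measurable (fun t : ℝ => ((round t : ℤ) : ℝ)) := by
      simp_rw [round_eq]
      exact measurable_from_top.comp (Int.measurable_floor.comp (measurable_id.add_const _))
    exact (measurable_id.sub h1).abs
  exact this.comp (measurable_fst.sub measurable_snd)

/-- The symmetric fundamental domain. -/
def Jh : Set ℝ := Set.Ioc (-(1/2) : ℝ) (1/2)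

lemma Jh_abs {h : ℝ} (hh : h ∈ Jh) : |h| ≤ 1/2 := abs_le.2 ⟨hh.1.le, hh.2⟩

lemma measI : MeasurableSet I01 := measurableSet_Ico
lemma measJ : MeasurableSet Jh := measurableSet_Ioc

lemma lint_shift (F : ℝ → ℝ≥0∞) (hF : Function.Periodic F 1) (x : ℝ) :
    ∫⁻ y in I01, F y = ∫⁻ h in Jh, F (x + h) := by
  have h1 : ∫⁻ y in I01, F y = ∫⁻ y in Set.Ioc (0:ℝ) (0+1), F y := by
    rw [I01, zero_add]; exact setLIntegral_congr Ico_ae_eq_Ioc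
  rw [h1, (isAddFundamentalDomain_Ioc (T := (1:ℝ)) one_pos 0 volume).setLIntegral_eq
    (isAddFundamentalDomain_Ioc one_pos (x - 1/2) volume)]
  · have := (measurePreserving_add_left (volume : Measure ℝ) x).setLIntegral_comp_emb
      (measurableEmbedding_addLeft x) F Jh
    rw [this]
    congr 2
    ext y
    simp only [Jh, mem_Ioc, mem_image]
    constructor
    · intro hy
      exact ⟨y - x, ⟨by linarith [hy.1], by linarith [hy.2]⟩, by ring⟩
    · rintro ⟨h, hh, rfl⟩
      exact ⟨by linarith [hh.1], by linarith [hh.2]⟩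
  · rintro ⟨g, hg⟩ y
    obtain ⟨k, rfl⟩ := AddSubgroup.mem_zmultiples_iff.1 hg
    have := hF.zsmul k y
    rw [AddSubgroup.mk_vadd, vadd_eq_add, add_comm]
    exact this

lemma lint_cov_le (F : ℝ → ℝ≥0∞) (hF : Measurable F) {a : ℝ} (ha : a ≠ 0) (b : ℝ) (S T : Set ℝ)
    (hS : MeasurableSet S) (hT : MeasurableSet T) (hST : ∀ t ∈ S, a * t + b ∈ T) :
    ∫⁻ t in S, F (a * t + b) ≤ ENNReal.ofReal |a|⁻¹ * ∫⁻ y in T, F y := by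
  have h0 : ∀ G : ℝ → ℝ≥0∞, Measurable G →
      ∫⁻ t, G (a * t + b) = ENNReal.ofReal |a|⁻¹ * ∫⁻ y, G y := by
    intro G hG
    have h1 : ∫⁻ t, G (a * t + b) = ∫⁻ z, G (z + b) ∂(Measure.map (a * ·) volume) := by
      rw [lintegral_map (by fun_prop) (by fun_prop)]
    rw [h1, Real.map_volume_mul_left ha, lintegral_smul_measure,
      lintegral_add_right_eq_self, abs_inv, smul_eq_mul]
  rw [← lintegral_indicator hS, ← lintegral_indicator hT, ← h0 _ (hF.indicator hT)]
  refine lintegral_mono fun t => ?_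
  by_cases ht : t ∈ S
  · simp [ht, hST t ht]
  · simp [ht]

instance probI : IsProbabilityMeasure (volume.restrict I01) :=
  ⟨by simp [I01]⟩

lemma jensenE {α : Type*} [MeasurableSpace α] (μ : Measure α) [IsProbabilityMeasure μ]
    (φ : α → ℝ≥0∞) (hφ : AEMeasurable φ μ) : (∫⁻ a, φ a ∂μ) ^ 2 ≤ ∫⁻ a, φ a ^ 2 ∂μ := by
  have h := ENNReal.lintegral_mul_le_Lp_mul_Lq μ (p := 2) (q := 2)
    (by rw [Real.holderConjugate_iff]; norm_num) hφ (aemeasurable_const (b := (1 : ℝ≥0∞)))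
  simp only [Pi.mul_apply, mul_one, ENNReal.one_rpow, lintegral_const, measure_univ] at h
  calc (∫⁻ a, φ a ∂μ) ^ 2 ≤ ((∫⁻ a, φ a ^ (2:ℝ) ∂μ) ^ (1 / 2 : ℝ)) ^ 2 := by gcongr
    _ = _ := by
      rw [← ENNReal.rpow_natCast, ← ENNReal.rpow_mul]; norm_num

lemma enorm_sq_ofReal {E : Type*} [NormedAddCommGroup E] (a : E) :
    ‖a‖ₑ ^ 2 = ENNReal.ofReal (‖a‖ ^ 2) := by
  rw [ENNReal.ofReal_pow (norm_nonneg _), ofReal_norm]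

lemma dT_zero_eq {y z : ℝ} (hy : y ∈ I01) (hz : z ∈ I01) (h : dT y z = 0) : y = z := by
  rw [dT_eq, abs_eq_zero] at h
  have h1 : |((round (y - z) : ℤ) : ℝ)| < 1 := by
    rw [← sub_eq_zero.1 h, abs_lt]
    constructor <;> linarith [hy.1, hy.2, hz.1, hz.2]
  have h2 : round (y - z) = 0 := by
    rw [← Int.abs_lt_one_iff]; exact_mod_cast h1
  rw [h2] at h; simp at h; linarith

lemma meas_gag {E : Type*} [NormedAddCommGroup E]
    (p : ℝ) (f : ℝ → E) (hf : Continuous f) :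
    Measurable (fun q : ℝ × ℝ => ENNReal.ofReal (‖f q.2 - f q.1‖ ^ 2 / dT q.1 q.2 ^ p)) := by
  have h1 : Continuous (fun q : ℝ × ℝ => ‖f q.2 - f q.1‖ ^ 2) := by fun_prop
  exact (h1.measurable.div (measurable_dT.pow_const p)).ennreal_ofReal

lemma J_bound {n : ℕ} (f : ℝ → En n) (hf : Continuous f) (x r : ℝ) (hx : x ∈ I01)
    (hr : 0 < r) (hr1 : r ≤ 1) :
    ‖∫ t in I01, f (r * t + (x - r * x))‖ ^ 2 ≤ r⁻¹ * ∫ y in I01, ‖f y‖ ^ 2 := by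
  have hint : IntegrableOn (fun y => ‖f y‖ ^ 2) I01 :=
    (Continuous.integrableOn_Icc (a := 0) (b := 1) (by fun_prop)).mono_set Ico_subset_Icc_self
  have h1 : ENNReal.ofReal (‖∫ t in I01, f (r * t + (x - r * x))‖ ^ 2) ≤
      ENNReal.ofReal (r⁻¹ * ∫ y in I01, ‖f y‖ ^ 2) := by
    rw [← enorm_sq_ofReal]
    calc _ ≤ (∫⁻ t in I01, ‖f (r * t + (x - r * x))‖ₑ) ^ 2 := by
          gcongr; exact enorm_integral_le_lintegral_enorm _
      _ ≤ ∫⁻ t in I01, ‖f (r * t + (x - r * x))‖ₑ ^ 2 :=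
          jensenE _ _ (by fun_prop)
      _ ≤ ENNReal.ofReal |r|⁻¹ * ∫⁻ y in I01, ‖f y‖ₑ ^ 2 := by
          refine lint_cov_le (fun y => ‖f y‖ₑ ^ 2) (by fun_prop) hr.ne' _ _ _ measI measI ?_
          intro t ht
          exact ⟨by nlinarith [ht.1, ht.2, hx.1, hx.2], by nlinarith [ht.1, ht.2, hx.1, hx.2]⟩
      _ = _ := by
          rw [abs_of_pos hr, ENNReal.ofReal_mul (by positivity),
            ofReal_integral_eq_lintegral_ofReal hint (ae_of_all _ fun _ => by positivity)]
          simp_rw [enorm_sq_ofReal]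
  have h2 : 0 ≤ ∫ y in I01, ‖f y‖ ^ 2 := integral_nonneg fun _ => by positivity
  exact (ENNReal.ofReal_le_ofReal_iff (by positivity)).1 h1

lemma J_diff {n : ℕ} (σ : ℝ) (hσ : 1/2 < σ) (f : ℝ → En n) (hf : Continuous f)
    (hg : gagliardoSqE σ f < ⊤) (x r : ℝ) (hx : x ∈ I01)
    (hr : 0 < r) (hr1 : r ≤ 1) :
    ‖(∫ t in I01, f (r * t + (x - r * x))) - ∫ t in I01, f ((r/2) * t + (x - (r/2) * x))‖ ^ 2 ≤
      2 * r ^ (2 * σ - 1) * (gagliardoSqE σ f).toReal := by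
  set J' := ∫ t in I01, f ((r/2) * t + (x - (r/2) * x)) with hJ'
  have hi : ∀ g : ℝ → En n, Continuous g → Integrable g (volume.restrict I01) := fun g hg =>
    (Continuous.integrableOn_Icc (a := 0) (b := 1) hg).mono_set Ico_subset_Icc_self
  set a : ℝ → ℝ := fun t => r * t + (x - r * x) with ha
  set b : ℝ → ℝ := fun t => (r/2) * t + (x - (r/2) * x) with hb
  have haI : ∀ t ∈ I01, a t ∈ I01 := by
    intro t ht
    exact ⟨by simp only [ha]; nlinarith [ht.1, ht.2, hx.1, hx.2],
      by simp only [ha]; nlinarith [ht.1, ht.2, hx.1, hx.2]⟩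
  have hbI : ∀ t ∈ I01, b t ∈ I01 := by
    intro t ht
    exact ⟨by simp only [hb]; nlinarith [ht.1, ht.2, hx.1, hx.2],
      by simp only [hb]; nlinarith [ht.1, ht.2, hx.1, hx.2]⟩
  have hac : Continuous a := by fun_prop
  have hbc : Continuous b := by fun_prop
  have e1 : (∫ t in I01, f (a t)) - J' = ∫ t in I01, (f (a t) - J') := by
    rw [integral_sub (hi _ (by fun_prop)) (integrable_const _)]; simp
  have e2 : ∀ t, f (a t) - J' = ∫ τ in I01, (f (a t) - f (b τ)) := by
    intro t
    rw [integral_sub (integrable_const _) (hi _ (by fun_prop))]; simp [hJ', hb]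
  set p := 2 * σ + 1 with hp
  set F : ℝ × ℝ → ℝ≥0∞ := fun q => ENNReal.ofReal (‖f q.2 - f q.1‖ ^ 2 / dT q.1 q.2 ^ p) with hF
  have hFm : Measurable F := meas_gag p f hf
  have pt : ∀ t ∈ I01, ∀ τ ∈ I01, ‖f (a t) - f (b τ)‖ₑ ^ 2 ≤
      ENNReal.ofReal (r ^ p) * F (a t, b τ) := by
    intro t ht τ hτ
    rw [enorm_sq_ofReal, hF, ← ENNReal.ofReal_mul (by positivity)]
    apply ENNReal.ofReal_le_ofReal
    simp only
    rcases (dT_nonneg (a t) (b τ)).eq_or_lt with h0 | h0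
    · have := dT_zero_eq (haI t ht) (hbI τ hτ) h0.symm
      simp [this]
    · have hd : dT (a t) (b τ) ≤ r := by
        refine (dT_le _ _).trans (abs_le.2 ⟨?_, ?_⟩) <;> simp only [ha, hb] <;>
        nlinarith [ht.1, ht.2, hx.1, hx.2, hτ.1, hτ.2]
      have : dT (a t) (b τ) ^ p ≤ r ^ p := Real.rpow_le_rpow h0.le hd (by linarith)
      have h3 : 0 < dT (a t) (b τ) ^ p := Real.rpow_pos_of_pos h0 _
      rw [norm_sub_rev, mul_div_assoc', le_div_iff₀ h3]
      nlinarith [sq_nonneg ‖f (b τ) - f (a t)‖]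
  have main : ENNReal.ofReal (‖(∫ t in I01, f (a t)) - J'‖ ^ 2) ≤
      ENNReal.ofReal (2 * r ^ (2 * σ - 1) * (gagliardoSqE σ f).toReal) := by
    rw [← enorm_sq_ofReal]
    calc _ ≤ (∫⁻ t in I01, ∫⁻ τ in I01, ‖f (a t) - f (b τ)‖ₑ) ^ 2 := by
          gcongr
          rw [e1]
          refine (enorm_integral_le_lintegral_enorm _).trans (lintegral_mono fun t => ?_)
          rw [e2]
          exact enorm_integral_le_lintegral_enorm _
      _ ≤ ∫⁻ t in I01, (∫⁻ τ in I01, ‖f (a t) - f (b τ)‖ₑ) ^ 2 := by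
          refine jensenE _ _ ?_
          refine (Measurable.lintegral_prod_right' (f := fun q : ℝ × ℝ => ‖f (a q.1) - f (b q.2)‖ₑ) ?_).aemeasurable
          exact Continuous.measurable (by fun_prop)
      _ ≤ ∫⁻ t in I01, ∫⁻ τ in I01, ‖f (a t) - f (b τ)‖ₑ ^ 2 := by
          refine lintegral_mono fun t => jensenE _ _ ?_
          exact (Continuous.measurable (by fun_prop)).aemeasurable
      _ ≤ ∫⁻ t in I01, ∫⁻ τ in I01, ENNReal.ofReal (r ^ p) * F (a t, b τ) := by
          refine setLIntegral_mono' measI fun t ht => setLIntegral_mono' measI fun τ hτ => pt t ht τ hτ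
      _ = ENNReal.ofReal (r ^ p) * ∫⁻ t in I01, ∫⁻ τ in I01, F (a t, b τ) := by
          simp_rw [lintegral_const_mul' _ _ ENNReal.ofReal_ne_top]
      _ ≤ ENNReal.ofReal (r ^ p) * ∫⁻ t in I01, ENNReal.ofReal |r/2|⁻¹ * ∫⁻ z in I01, F (a t, z) := by
          gcongr with t
          exact lint_cov_le (fun z => F (a t, z)) (by fun_prop) (by positivity) _ _ _ measI measI hbI
      _ = ENNReal.ofReal (r ^ p) * ENNReal.ofReal |r/2|⁻¹ * ∫⁻ t in I01, ∫⁻ z in I01, F (a t, z) := by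
          simp_rw [lintegral_const_mul' _ _ ENNReal.ofReal_ne_top, mul_assoc]
      _ ≤ ENNReal.ofReal (r ^ p) * ENNReal.ofReal |r/2|⁻¹ *
            (ENNReal.ofReal |r|⁻¹ * ∫⁻ y in I01, ∫⁻ z in I01, F (y, z)) := by
          gcongr
          exact lint_cov_le (fun y => ∫⁻ z in I01, F (y, z))
            (Measurable.lintegral_prod_right' hFm) hr.ne' _ _ _ measI measI haI
      _ = _ := by
          have : ∫⁻ y in I01, ∫⁻ z in I01, F (y, z) = gagliardoSqE σ f := rfl
          rw [this, ENNReal.ofReal_mul (by positivity), ENNReal.ofReal_toReal hg.ne, ← mul_assoc,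
            ← ENNReal.ofReal_mul (by positivity), ← ENNReal.ofReal_mul (by positivity)]
          congr 2
          rw [abs_of_pos hr, abs_of_pos (by positivity : 0 < r/2)]
          have : r ^ p = r ^ (2 * σ - 1) * r ^ 2 := by
            rw [← Real.rpow_natCast, ← Real.rpow_add hr]; congr 1; push_cast; ring
          rw [this]; field_simp
  exact (ENNReal.ofReal_le_ofReal_iff (by positivity)).1 main

lemma morrey {n : ℕ} (σ : ℝ) (hσ : 1/2 < σ) (η : ℝ) (hη : 0 < η) :
    ∃ C : ℝ, 0 < C ∧ ∀ f : ℝ → En n, Continuous f → gagliardoSqE σ f < ⊤ → ∀ x ∈ I01,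
      ‖f x‖ ^ 2 ≤ η * (gagliardoSqE σ f).toReal + C * ∫ y in I01, ‖f y‖ ^ 2 := by
  set q : ℝ := (1/2 : ℝ) ^ (σ - 1/2) with hq
  have hq0 : 0 < q := by positivity
  have hq1 : q < 1 := Real.rpow_lt_one (by norm_num) (by norm_num) (by linarith)
  have hlim : Tendsto (fun k : ℕ => 4 * (q ^ k / (1 - q)) ^ 2) atTop (𝓝 0) := by
    have := (((tendsto_pow_atTop_nhds_zero_of_lt_one hq0.le hq1).div_const (1 - q)).pow 2).const_mul 4
    simpa using this
  obtain ⟨k, hk⟩ := (hlim.eventually (gt_mem_nhds hη)).exists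
  refine ⟨2 * 2 ^ k, by positivity, fun f hf hg x hx => ?_⟩
  set g := (gagliardoSqE σ f).toReal with hgd
  have hg0 : 0 ≤ g := ENNReal.toReal_nonneg
  set J : ℕ → En n := fun k => ∫ t in I01, f ((1/2:ℝ)^k * t + (x - (1/2:ℝ)^k * x)) with hJ
  have hd : ∀ k, dist (J k) (J (k+1)) ≤ √(2 * g) * q ^ k := by
    intro k
    have := J_diff σ hσ f hf hg x ((1/2:ℝ)^k) hx (by positivity) (pow_le_one₀ (by norm_num) (by norm_num))
    rw [dist_eq_norm]
    have e : ((1/2:ℝ)^k)/2 = (1/2)^(k+1) := by rw [pow_succ]; ring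
    rw [e] at this
    apply abs_le_of_sq_le_sq' _ (by positivity) |>.2
    refine this.trans (le_of_eq ?_)
    rw [mul_pow, Real.sq_sqrt (by positivity), hq, ← Real.rpow_natCast, ← Real.rpow_natCast, ← Real.rpow_natCast,
      ← Real.rpow_mul (by positivity), ← Real.rpow_mul (by positivity), ← Real.rpow_mul (by positivity), ← hgd]
    rw [show (k:ℝ) * (2 * σ - 1) = (σ - 1/2) * k * (2:ℕ) by push_cast; ring]
    ring_nf
  have hl : Tendsto J atTop (𝓝 (f x)) := by
    have hc : Continuous (fun r : ℝ => ∫ t in (0:ℝ)..1, f (r * t + (x - r * x))) :=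
      intervalIntegral.continuous_parametric_intervalIntegral_of_continuous' (by fun_prop) 0 1
    have h0 : (fun r : ℝ => ∫ t in (0:ℝ)..1, f (r * t + (x - r * x))) 0 = f x := by simp
    have := hc.tendsto 0
    have h0' : ∫ t in (0:ℝ)..1, f (0 * t + (x - 0 * x)) = f x := h0
    rw [h0'] at this
    have h2 := this.comp (tendsto_pow_atTop_nhds_zero_of_lt_one (r := (1/2:ℝ)) (by norm_num) (by norm_num))
    refine h2.congr fun k => ?_
    simp only [Function.comp, hJ]
    rw [intervalIntegral.integral_of_le zero_le_one, I01]
    exact (setIntegral_congr_set Ico_ae_eq_Ioc).symm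
  have h1 := dist_le_of_le_geometric_of_tendsto q _ hq1 hd hl k
  have h2 := J_bound f hf x ((1/2:ℝ)^k) hx (by positivity) (pow_le_one₀ (by norm_num) (by norm_num))
  have h3 : ‖f x‖ ≤ ‖J k‖ + dist (J k) (f x) := by
    rw [dist_eq_norm]
    have := norm_sub_le (J k) (J k - f x)
    simpa using this
  have h4 : dist (J k) (f x) ^ 2 ≤ 2 * g * (q ^ k / (1 - q)) ^ 2 := by
    calc _ ≤ (√(2 * g) * q ^ k / (1 - q)) ^ 2 := by gcongr
      _ = _ := by rw [mul_div_assoc, mul_pow, Real.sq_sqrt (by positivity)]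
  have h5 : ‖f x‖ ^ 2 ≤ 2 * ‖J k‖ ^ 2 + 2 * dist (J k) (f x) ^ 2 := by
    have : ‖f x‖ ^ 2 ≤ (‖J k‖ + dist (J k) (f x)) ^ 2 := by gcongr
    nlinarith [sq_nonneg (‖J k‖ - dist (J k) (f x))]
  have h6 : ‖J k‖ ^ 2 ≤ 2 ^ k * ∫ y in I01, ‖f y‖ ^ 2 := by
    refine h2.trans (le_of_eq ?_)
    congr 1; rw [← inv_pow]; norm_num
  nlinarith

lemma per_deriv {n : ℕ} {u : ℝ → En n} (hu : Function.Periodic u 1) :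
    Function.Periodic (deriv u) 1 := by
  intro x
  have : (fun x => u (x + 1)) = u := funext hu
  rw [← deriv_comp_add_const, this]

lemma per_fract {n : ℕ} {f : ℝ → En n} (hf : Function.Periodic f 1) (x : ℝ) :
    f (Int.fract x) = f x := by
  have h := hf.sub_zsmul_eq ⌊x⌋ (x := x)
  rw [← h]; congr 1; rw [Int.fract]; simp

/-- Averaged squared oscillation. -/
def Aav {n : ℕ} (f : ℝ → En n) (x h : ℝ) : ℝ := ∫ t in I01, ‖f (x + t * h) - f x‖ ^ 2

/-- weight -/
def Wt (p h : ℝ) : ℝ := (|h| ^ p)⁻¹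

lemma Wt_nonneg (p h : ℝ) : 0 ≤ Wt p h := by unfold Wt; positivity

lemma meas_Wt (p : ℝ) : Measurable (Wt p) := by
  unfold Wt; exact ((continuous_abs.measurable).pow_const p).inv

lemma Aav_nonneg {n : ℕ} (f : ℝ → En n) (x h : ℝ) : 0 ≤ Aav f x h :=
  integral_nonneg fun _ => by positivity

lemma intI {E : Type*} [NormedAddCommGroup E] {g : ℝ → E} (hg : Continuous g) :
    Integrable g (volume.restrict I01) :=
  (Continuous.integrableOn_Icc (a := 0) (b := 1) hg).mono_set Ico_subset_Icc_self

lemma ofReal_Aav {n : ℕ} (f : ℝ → En n) (hf : Continuous f) (x h : ℝ) :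
    ENNReal.ofReal (Aav f x h) = ∫⁻ t in I01, ENNReal.ofReal (‖f (x + t * h) - f x‖ ^ 2) :=
  ofReal_integral_eq_lintegral_ofReal (intI (by fun_prop)) (ae_of_all _ fun _ => by positivity)

lemma meas_Aav {n : ℕ} (f : ℝ → En n) (hf : Continuous f) :
    Measurable (fun q : ℝ × ℝ => Aav f q.1 q.2) := by
  have : (fun q : ℝ × ℝ => Aav f q.1 q.2) = fun q : ℝ × ℝ =>
      ∫ t in (0:ℝ)..1, ‖f (q.1 + t * q.2) - f q.1‖ ^ 2 := by
    ext q
    rw [Aav, intervalIntegral.integral_of_le zero_le_one, I01]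
    exact setIntegral_congr_set Ico_ae_eq_Ioc
  rw [this]
  exact (intervalIntegral.continuous_parametric_intervalIntegral_of_continuous'
    (by fun_prop) 0 1).measurable

lemma lemmaA {n : ℕ} (p : ℝ) (hp : 1 ≤ p) (f : ℝ → En n) (hf : Continuous f) (x : ℝ) :
    ∫⁻ h in Jh, ENNReal.ofReal (Aav f x h * Wt p h) ≤
      ∫⁻ h in Jh, ENNReal.ofReal (‖f (x + h) - f x‖ ^ 2 * Wt p h) := by
  set F : ℝ → ℝ≥0∞ := fun h => ENNReal.ofReal (‖f (x + h) - f x‖ ^ 2 * Wt p h) with hF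
  have hw := meas_Wt p
  have hFm : Measurable F := by
    have : Continuous (fun h => ‖f (x + h) - f x‖ ^ 2) := by fun_prop
    exact (this.measurable.mul hw).ennreal_ofReal
  calc _ = ∫⁻ h in Jh, ∫⁻ t in I01, ENNReal.ofReal (‖f (x + t * h) - f x‖ ^ 2 * Wt p h) := by
        refine lintegral_congr fun h => ?_
        rw [ENNReal.ofReal_mul (Aav_nonneg _ _ _), ofReal_Aav f hf,
          ← lintegral_mul_const' _ _ ENNReal.ofReal_ne_top]
        simp_rw [ENNReal.ofReal_mul (sq_nonneg _)]
    _ = ∫⁻ t in I01, ∫⁻ h in Jh, ENNReal.ofReal (‖f (x + t * h) - f x‖ ^ 2 * Wt p h) := by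
        refine lintegral_lintegral_swap ?_
        have h1 : Continuous (fun q : ℝ × ℝ => ‖f (x + q.2 * q.1) - f x‖ ^ 2) := by fun_prop
        exact (h1.measurable.mul (hw.comp measurable_fst)).ennreal_ofReal.aemeasurable
    _ ≤ ∫⁻ t in I01, ∫⁻ h in Jh, F h := by
        refine setLIntegral_mono' measI fun t ht => ?_
        rcases ht.1.eq_or_lt with h0 | h0
        · simp [← h0]
        · have e : ∀ h, ENNReal.ofReal (‖f (x + t * h) - f x‖ ^ 2 * Wt p h) =
              ENNReal.ofReal (t ^ p) * F (t * h + 0) := by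
            intro h
            rw [hF, ← ENNReal.ofReal_mul (by positivity)]
            congr 1
            simp only [Wt, add_zero]
            rw [abs_mul, abs_of_pos h0, Real.mul_rpow h0.le (abs_nonneg _), mul_inv]
            have : t ^ p ≠ 0 := (Real.rpow_pos_of_pos h0 p).ne'
            field_simp
          simp_rw [e]
          rw [lintegral_const_mul' _ _ ENNReal.ofReal_ne_top]
          calc _ ≤ ENNReal.ofReal (t ^ p) * (ENNReal.ofReal |t|⁻¹ * ∫⁻ h in Jh, F h) := by
                gcongr
                refine lint_cov_le F hFm h0.ne' 0 _ _ measJ measJ ?_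
                intro h hh
                have := ht.2
                exact ⟨by nlinarith [hh.1, hh.2], by nlinarith [hh.1, hh.2]⟩
            _ ≤ 1 * ∫⁻ h in Jh, F h := by
                rw [← mul_assoc, ← ENNReal.ofReal_mul (by positivity)]
                gcongr
                rw [← ENNReal.ofReal_one]
                apply ENNReal.ofReal_le_ofReal
                rw [abs_of_pos h0, ← Real.rpow_neg_one, ← Real.rpow_add h0]
                exact Real.rpow_le_one h0.le ht.2.le (by linarith)
            _ = _ := one_mul _
    _ = _ := by simp

lemma gag_eq {n : ℕ} (σ : ℝ) (f : ℝ → En n) (hf : Function.Periodic f 1) :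
    gagliardoSqE σ f =
      ∫⁻ x in I01, ∫⁻ h in Jh, ENNReal.ofReal (‖f (x + h) - f x‖ ^ 2 * Wt (2 * σ + 1) h) := by
  unfold gagliardoSqE
  refine lintegral_congr fun x => ?_
  rw [lint_shift _ _ x]
  · refine setLIntegral_congr_fun measJ fun h hh => ?_
    simp only [Wt, div_eq_mul_inv, dT_add x h (Jh_abs hh)]
  · intro y; simp only [hf y, dT_add_one]

lemma normsq_int_le {n : ℕ} (g : ℝ → En n) (hg : Continuous g) :
    ‖∫ t in I01, g t‖ ^ 2 ≤ ∫ t in I01, ‖g t‖ ^ 2 := by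
  have := J_bound g hg 0 1 (by simp [I01]) one_pos le_rfl
  simpa using this

lemma ftcI {n : ℕ} (u : ℝ → En n) (hu : ContDiff ℝ 1 u) (x h : ℝ) :
    u (x + h) - u x = h • ∫ t in I01, deriv u (x + t * h) := by
  have hc : Continuous (deriv u) := hu.continuous_deriv le_rfl
  have hd : ∀ t ∈ uIcc (0:ℝ) 1, HasDerivAt (fun t => u (x + t * h)) (h • deriv u (x + t * h)) t := by
    intro t _
    have h1 : HasDerivAt (fun t : ℝ => x + t * h) h t := by
      simpa using ((hasDerivAt_id t).mul_const h).const_add x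
    have h2 := ((hu.differentiable one_ne_zero) (x + t * h)).hasDerivAt
    exact h2.scomp t h1
  have := intervalIntegral.integral_eq_sub_of_hasDerivAt hd
    (Continuous.intervalIntegrable (by fun_prop) _ _)
  rw [intervalIntegral.integral_smul, intervalIntegral.integral_of_le zero_le_one] at this
  rw [I01, setIntegral_congr_set Ico_ae_eq_Ioc, this]
  simp

lemma taylorI {n : ℕ} (u : ℝ → En n) (hu : ContDiff ℝ 1 u) (x h : ℝ) :
    ‖u (x + h) - u x - h • deriv u x‖ ^ 2 ≤ h ^ 2 * Aav (deriv u) x h := by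
  have hc : Continuous (deriv u) := hu.continuous_deriv le_rfl
  have : u (x + h) - u x - h • deriv u x = h • ∫ t in I01, (deriv u (x + t * h) - deriv u x) := by
    rw [integral_sub (intI (by fun_prop)) (integrable_const _), ftcI u hu, smul_sub]; simp
  rw [this, norm_smul, mul_pow, Real.norm_eq_abs, sq_abs]
  gcongr
  exact normsq_int_le _ (by fun_prop)

lemma per_bound {n : ℕ} (f : ℝ → En n) (hf : Function.Periodic f 1) (S : ℝ)
    (hS : ∀ x ∈ I01, ‖f x‖ ≤ S) (x : ℝ) : ‖f x‖ ≤ S := by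
  have h := per_fract hf x
  rw [← h]
  exact hS _ ⟨Int.fract_nonneg x, Int.fract_lt_one x⟩

lemma lip_of_deriv {n : ℕ} (u : ℝ → En n) (hu : ContDiff ℝ 1 u) (S : ℝ)
    (hS : ∀ x, ‖deriv u x‖ ≤ S) (x h : ℝ) : ‖u (x + h) - u x‖ ≤ S * |h| := by
  have := Convex.norm_image_sub_le_of_norm_deriv_le (f := u) (s := univ) (C := S) (x := x) (y := x + h)
    (fun z _ => (hu.differentiable one_ne_zero) z) (fun z _ => hS z) convex_univ
    (mem_univ _) (mem_univ _)
  simpa using this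

lemma per_cont_bdd {n : ℕ} (f : ℝ → En n) (hf : Function.Periodic f 1) (hc : Continuous f) :
    ∃ S : ℝ, 0 < S ∧ ∀ x, ‖f x‖ ≤ S := by
  obtain ⟨C, hC⟩ := (isCompact_Icc (a := (0:ℝ)) (b := 1)).exists_bound_of_continuousOn hc.continuousOn
  refine ⟨max C 1, by positivity, per_bound f hf _ fun x hx => (hC x ⟨hx.1, hx.2.le⟩).trans (le_max_left _ _)⟩

/-- Quantitative geometric data of a curve. -/
structure Geo {n : ℕ} (γ : ℝ → En n) (m L : ℝ) : Prop where
  mpos : 0 < m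
  Lpos : 0 < L
  per : Function.Periodic γ 1
  c1 : ContDiff ℝ 1 γ
  lo : ∀ x, m ≤ ‖deriv γ x‖
  hi : ∀ x, ‖deriv γ x‖ ≤ L
  bl : ∀ x h, |h| ≤ 1/2 → m * |h| ≤ ‖γ (x + h) - γ x‖
  bu : ∀ x h, ‖γ (x + h) - γ x‖ ≤ L * |h|

lemma geo_exists {n : ℕ} (s : ℝ) (γ : ℝ → En n) (hγ : InM s γ) : ∃ m L, Geo γ m L := by
  obtain ⟨⟨hper, hc1, -⟩, hinj, him⟩ := hγ
  have hc : Continuous (deriv γ) := hc1.continuous_deriv le_rfl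
  obtain ⟨L, hL0, hL⟩ := per_cont_bdd _ (per_deriv hper) hc
  set q : ℝ × ℝ → En n := fun z => ∫ t in (0:ℝ)..1, deriv γ (z.1 + t * z.2) with hq
  have hqc : Continuous q := intervalIntegral.continuous_parametric_intervalIntegral_of_continuous'
    (by fun_prop) 0 1
  have hqe : ∀ x h, γ (x + h) - γ x = h • q (x, h) := by
    intro x h
    rw [ftcI γ hc1, hq, I01]
    simp only
    rw [intervalIntegral.integral_of_le zero_le_one, setIntegral_congr_set Ico_ae_eq_Ioc]
  have hK : IsCompact (Icc (0:ℝ) 1 ×ˢ Icc (-(1/2) : ℝ) (1/2)) := isCompact_Icc.prod isCompact_Icc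
  have hq0 : ∀ z ∈ Icc (0:ℝ) 1 ×ˢ Icc (-(1/2) : ℝ) (1/2), q z ≠ 0 := by
    rintro ⟨x, h⟩ ⟨-, hh⟩ h0
    rcases eq_or_ne h 0 with rfl | hne
    · apply him x
      simpa [hq] using h0
    · have e : γ (x + h) = γ x := by
        have := hqe x h
        rw [h0, smul_zero] at this
        exact sub_eq_zero.1 this
      rw [← per_fract hper (x + h), ← per_fract hper x] at e
      have e2 := hinj ⟨Int.fract_nonneg _, Int.fract_lt_one _⟩ ⟨Int.fract_nonneg _, Int.fract_lt_one _⟩ e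
      rw [Int.fract_eq_fract] at e2
      obtain ⟨k, hk⟩ := e2
      have hk' : h = k := by linarith
      have h1 : |h| < 1 := by
        have := abs_le.2 ⟨hh.1, hh.2⟩
        linarith
      rw [hk'] at h1 hne
      have : |k| < 1 := by exact_mod_cast h1
      rw [Int.abs_lt_one_iff] at this
      simp [this] at hne
  obtain ⟨z0, hz0, hmin⟩ := hK.exists_isMinOn (f := fun z => ‖q z‖)
    ⟨(0,0), by constructor <;> constructor <;> norm_num⟩ (by fun_prop)
  have hm : 0 < ‖q z0‖ := norm_pos_iff.2 (hq0 z0 hz0)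
  have hm2 : ∀ x h, |h| ≤ 1/2 → ‖q z0‖ ≤ ‖q (x, h)‖ := by
    intro x h hh
    have e : q (x, h) = q (Int.fract x, h) := by
      simp only [hq]
      congr 1; ext1 t
      have := (per_deriv hper).sub_zsmul_eq (⌊x⌋) (x := x + t * h)
      rw [← this]
      congr 1
      rw [Int.fract, zsmul_eq_mul]; ring
    rw [e]
    exact hmin ⟨⟨Int.fract_nonneg _, (Int.fract_lt_one _).le⟩, abs_le.1 hh⟩
  refine ⟨‖q z0‖, L, hm, hL0, hper, hc1, ?_, hL, ?_, lip_of_deriv γ hc1 L hL⟩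
  · intro x
    have := hm2 x 0 (by norm_num)
    simpa [hq] using this
  · intro x h hh
    rw [hqe, norm_smul, Real.norm_eq_abs, mul_comm]
    gcongr
    exact hm2 x h hh

/-- numerator of the operator. -/
def Nn {n : ℕ} (γ u : ℝ → En n) (x y : ℝ) : En n := u y - u x - DDg γ u x (γ y - γ x)

/-- quadratic density of the first form. -/
def b1 {n : ℕ} (s : ℝ) (γ u : ℝ → En n) (x y : ℝ) : ℝ := ‖Rop s γ u x y‖ ^ 2 * muW γ x y

lemma b1_nonneg {n : ℕ} (s : ℝ) (γ u : ℝ → En n) (x y : ℝ) : 0 ≤ b1 s γ u x y := by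
  unfold b1 muW; positivity

lemma b1_eq {n : ℕ} (s : ℝ) (γ u : ℝ → En n) (x y : ℝ) (h : 0 < ‖γ y - γ x‖) :
    b1 s γ u x y = ‖Nn γ u x y‖ ^ 2 * (‖deriv γ x‖ * ‖deriv γ y‖) / ‖γ y - γ x‖ ^ (2 * s + 1) := by
  have e : ‖γ y - γ x‖ ^ (2 * s + 1) = (‖γ y - γ x‖ ^ s) ^ 2 * ‖γ y - γ x‖ := by
    rw [Real.rpow_add_one h.ne', mul_comm 2 s, Real.rpow_mul h.le]; norm_cast
  have h2 : 0 < ‖γ y - γ x‖ ^ s := Real.rpow_pos_of_pos h s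
  rw [e, b1, muW, Rop, norm_smul, norm_inv, Real.norm_of_nonneg h2.le, Nn]
  field_simp

lemma coef_est {n : ℕ} (g D : En n) (h m : ℝ) (hm : 0 < m) (hg : m ≤ ‖g‖) :
    ((‖g‖ ^ 2)⁻¹ * ⟪g, D⟫ - h) ^ 2 ≤ (m ^ 2)⁻¹ * ‖D - h • g‖ ^ 2 := by
  have hg0 : 0 < ‖g‖ := hm.trans_le hg
  have e : (‖g‖ ^ 2)⁻¹ * ⟪g, D⟫ - h = (‖g‖ ^ 2)⁻¹ * ⟪g, D - h • g⟫ := by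
    rw [inner_sub_right, inner_smul_right, real_inner_self_eq_norm_sq]; field_simp
  have h1 : ⟪g, D - h • g⟫ ^ 2 ≤ (‖g‖ * ‖D - h • g‖) ^ 2 :=
    sq_le_sq' (by linarith [neg_le_of_abs_le (abs_real_inner_le_norm g (D - h • g))])
      (real_inner_le_norm _ _)
  rw [e, mul_pow]
  calc _ ≤ ((‖g‖ ^ 2)⁻¹) ^ 2 * (‖g‖ * ‖D - h • g‖) ^ 2 := by gcongr
    _ = (‖g‖ ^ 2)⁻¹ * ‖D - h • g‖ ^ 2 := by field_simp
    _ ≤ _ := by gcongr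

section
variable {n : ℕ} {γ : ℝ → En n} {m L : ℝ} (G : Geo γ m L) {u : ℝ → En n} (hu : ContDiff ℝ 1 u)
  {S : ℝ} (hS : ∀ x, ‖deriv u x‖ ≤ S)
include G hu hS

lemma N_upper (x h : ℝ) : ‖Nn γ u x (x + h)‖ ^ 2 ≤
    h ^ 2 * (2 * Aav (deriv u) x h + 2 * (m ^ 2)⁻¹ * S ^ 2 * Aav (deriv γ) x h) := by
  set α := (‖deriv γ x‖ ^ 2)⁻¹ * ⟪deriv γ x, γ (x + h) - γ x⟫ with hα
  have e : Nn γ u x (x + h) = (u (x + h) - u x - h • deriv u x) - (α - h) • deriv u x := by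
    rw [Nn, DDg, sub_smul]; abel
  have h1 := taylorI u hu x h
  have h2 := taylorI γ G.c1 x h
  have h3 := coef_est (deriv γ x) (γ (x + h) - γ x) h m G.mpos (G.lo x)
  rw [← hα] at h3
  have h4 : ‖(α - h) • deriv u x‖ ^ 2 ≤ (m ^ 2)⁻¹ * (h ^ 2 * Aav (deriv γ) x h) * S ^ 2 := by
    rw [norm_smul, mul_pow, Real.norm_eq_abs, sq_abs]
    have : ‖deriv u x‖ ^ 2 ≤ S ^ 2 := pow_le_pow_left₀ (norm_nonneg _) (hS x) 2
    have hm := G.mpos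
    have : (α - h) ^ 2 ≤ (m ^ 2)⁻¹ * (h ^ 2 * Aav (deriv γ) x h) := h3.trans (by gcongr)
    have := Aav_nonneg (deriv γ) x h
    gcongr
  rw [e]
  set a := u (x + h) - u x - h • deriv u x
  set b := (α - h) • deriv u x
  have h5 := norm_sub_le a b
  have h6 : ‖a - b‖ ^ 2 ≤ (‖a‖ + ‖b‖) ^ 2 := by gcongr
  nlinarith [sq_nonneg (‖a‖ - ‖b‖)]

omit hu in
lemma N_lower (x h : ℝ) : h ^ 2 * ‖deriv u (x + h) - deriv u x‖ ^ 2 ≤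
    4 * (‖Nn γ u x (x + h)‖ ^ 2 + ‖Nn γ u (x + h) x‖ ^ 2 + (m ^ 2)⁻¹ * S ^ 2 * (h ^ 2 *
      (3 * Aav (deriv γ) x h + 2 * ‖deriv γ (x + h) - deriv γ x‖ ^ 2))) := by
  have hm := G.mpos
  set y := x + h with hy
  set D := γ y - γ x with hD
  set α := (‖deriv γ x‖ ^ 2)⁻¹ * ⟪deriv γ x, D⟫ with hα
  set β := (‖deriv γ y‖ ^ 2)⁻¹ * ⟪deriv γ y, D⟫ with hβ
  have e : h • (deriv u y - deriv u x) = Nn γ u x y + Nn γ u y x +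
      ((α - h) • deriv u x - (β - h) • deriv u y) := by
    have : γ x - γ y = - D := by rw [hD]; abel
    rw [Nn, Nn, DDg, DDg, this, inner_neg_right, mul_neg, neg_smul, ← hα, ← hβ]
    simp only [sub_smul, smul_sub]; abel
  have h2 : ‖D - h • deriv γ x‖ ^ 2 ≤ h ^ 2 * Aav (deriv γ) x h := taylorI γ G.c1 x h
  have ha : (α - h) ^ 2 ≤ (m ^ 2)⁻¹ * (h ^ 2 * Aav (deriv γ) x h) :=
    (coef_est (deriv γ x) D h m G.mpos (G.lo x)).trans (by gcongr)
  have h3 : ‖D - h • deriv γ y‖ ^ 2 ≤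
      h ^ 2 * (2 * Aav (deriv γ) x h + 2 * ‖deriv γ y - deriv γ x‖ ^ 2) := by
    have e2 : D - h • deriv γ y = (D - h • deriv γ x) - h • (deriv γ y - deriv γ x) := by
      rw [smul_sub]; abel
    rw [e2]
    have h5 := norm_sub_le (D - h • deriv γ x) (h • (deriv γ y - deriv γ x))
    set a := D - h • deriv γ x
    set b := h • (deriv γ y - deriv γ x) with hb
    have hbb : ‖b‖ ^ 2 = h ^ 2 * ‖deriv γ y - deriv γ x‖ ^ 2 := by
      rw [hb, norm_smul, mul_pow, Real.norm_eq_abs, sq_abs]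
    have h6 : ‖a - b‖ ^ 2 ≤ (‖a‖ + ‖b‖) ^ 2 := by gcongr
    nlinarith [sq_nonneg (‖a‖ - ‖b‖)]
  have hb : (β - h) ^ 2 ≤ (m ^ 2)⁻¹ * (h ^ 2 * (2 * Aav (deriv γ) x h + 2 * ‖deriv γ y - deriv γ x‖ ^ 2)) :=
    (coef_est (deriv γ y) D h m G.mpos (G.lo y)).trans (by gcongr)
  have sm : ∀ (c : ℝ) z, ‖c • deriv u z‖ ^ 2 ≤ c ^ 2 * S ^ 2 := by
    intro c z
    rw [norm_smul, mul_pow, Real.norm_eq_abs, sq_abs]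
    have : ‖deriv u z‖ ^ 2 ≤ S ^ 2 := pow_le_pow_left₀ (norm_nonneg _) (hS z) 2
    gcongr
  have sa := (sm (α - h) x).trans (mul_le_mul_of_nonneg_right ha (sq_nonneg S))
  have sb := (sm (β - h) y).trans (mul_le_mul_of_nonneg_right hb (sq_nonneg S))
  have l : h ^ 2 * ‖deriv u y - deriv u x‖ ^ 2 = ‖h • (deriv u y - deriv u x)‖ ^ 2 := by
    rw [norm_smul, mul_pow, Real.norm_eq_abs, sq_abs]
  rw [l, e]
  set p := Nn γ u x y
  set q := Nn γ u y x
  set a := (α - h) • deriv u x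
  set b := (β - h) • deriv u y
  have t : ‖p + q + (a - b)‖ ≤ ‖p‖ + ‖q‖ + (‖a‖ + ‖b‖) :=
    (norm_add_le _ _).trans (add_le_add (norm_add_le _ _) (norm_sub_le _ _))
  have t2 : ‖p + q + (a - b)‖ ^ 2 ≤ (‖p‖ + ‖q‖ + (‖a‖ + ‖b‖)) ^ 2 := by gcongr
  nlinarith [sq_nonneg (‖p‖ - ‖q‖), sq_nonneg (‖a‖ - ‖b‖), sq_nonneg (‖p‖ + ‖q‖ - (‖a‖ + ‖b‖))]

lemma b1_upper (s : ℝ) (hs : 0 < s) (x h : ℝ) (hh : |h| ≤ 1/2) : b1 s γ u x (x + h) ≤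
    L ^ 2 * (m ^ (2 * s + 1))⁻¹ * (2 * Aav (deriv u) x h + 2 * (m ^ 2)⁻¹ * S ^ 2 * Aav (deriv γ) x h) *
      Wt (2 * (s - 1) + 1) h := by
  have hm := G.mpos
  have hL := G.Lpos
  have p1 := Aav_nonneg (deriv u) x h
  have p2 := Aav_nonneg (deriv γ) x h
  have p3 := Wt_nonneg (2 * (s - 1) + 1) h
  rcases eq_or_ne h 0 with rfl | h0
  · have : b1 s γ u x (x + 0) = 0 := by simp [b1, Rop, DDg]
    rw [this]; positivity
  have ha : 0 < |h| := abs_pos.2 h0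
  have hd := G.bl x h hh
  have hd0 : 0 < ‖γ (x + h) - γ x‖ := lt_of_lt_of_le (by positivity) hd
  rw [b1_eq s γ u _ _ hd0]
  have e : |h| ^ (2 * s + 1) = |h| ^ (2 * (s - 1) + 1) * h ^ 2 := by
    rw [← sq_abs h, ← Real.rpow_natCast, ← Real.rpow_add ha]; congr 1; push_cast; ring
  have hq : 0 < |h| ^ (2 * (s - 1) + 1) := Real.rpow_pos_of_pos ha _
  have k : m ^ (2 * s + 1) * (|h| ^ (2 * (s - 1) + 1) * h ^ 2) ≤ ‖γ (x + h) - γ x‖ ^ (2 * s + 1) := by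
    rw [← e, ← Real.mul_rpow hm.le ha.le]
    exact Real.rpow_le_rpow (by positivity) hd (by linarith)
  have hh2 : 0 < h ^ 2 := by positivity
  have N := N_upper G hu hS x h
  calc _ ≤ (h ^ 2 * (2 * Aav (deriv u) x h + 2 * (m ^ 2)⁻¹ * S ^ 2 * Aav (deriv γ) x h)) * (L * L) /
        (m ^ (2 * s + 1) * (|h| ^ (2 * (s - 1) + 1) * h ^ 2)) := by
        gcongr
        · exact G.hi x
        · exact G.hi _
    _ = _ := by
        unfold Wt
        have : m ^ (2 * s + 1) ≠ 0 := (Real.rpow_pos_of_pos hm _).ne'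
        field_simp

omit hS hu in
lemma b1_lower (s : ℝ) (hs : 0 < s) (x y h : ℝ) (h0 : h ≠ 0) (hD : ‖γ y - γ x‖ ≤ L * |h|)
    (hD0 : 0 < ‖γ y - γ x‖) :
    ‖Nn γ u x y‖ ^ 2 * (h ^ 2)⁻¹ * Wt (2 * (s - 1) + 1) h ≤
      L ^ (2 * s + 1) * (m ^ 2)⁻¹ * b1 s γ u x y := by
  have hm := G.mpos
  have hL := G.Lpos
  have ha : 0 < |h| := abs_pos.2 h0
  have hh2 : 0 < h ^ 2 := by positivity
  rw [b1_eq s γ u _ _ hD0]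
  have e : |h| ^ (2 * s + 1) = |h| ^ (2 * (s - 1) + 1) * h ^ 2 := by
    rw [← sq_abs h, ← Real.rpow_natCast, ← Real.rpow_add ha]; congr 1; push_cast; ring
  have hq : 0 < |h| ^ (2 * (s - 1) + 1) := Real.rpow_pos_of_pos ha _
  have k : ‖γ y - γ x‖ ^ (2 * s + 1) ≤ L ^ (2 * s + 1) * (|h| ^ (2 * (s - 1) + 1) * h ^ 2) := by
    rw [← e, ← Real.mul_rpow hL.le ha.le]
    exact Real.rpow_le_rpow (by positivity) hD (by linarith)
  have hD1 : 0 < ‖γ y - γ x‖ ^ (2 * s + 1) := Real.rpow_pos_of_pos hD0 _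
  have hL1 : 0 < L ^ (2 * s + 1) := Real.rpow_pos_of_pos hL _
  have hmm : m ^ 2 ≤ ‖deriv γ x‖ * ‖deriv γ y‖ := by
    rw [sq]; exact mul_le_mul (G.lo x) (G.lo y) hm.le (norm_nonneg _)
  calc _ = L ^ (2 * s + 1) * (m ^ 2)⁻¹ * (‖Nn γ u x y‖ ^ 2 * m ^ 2 /
        (L ^ (2 * s + 1) * (|h| ^ (2 * (s - 1) + 1) * h ^ 2))) := by
        unfold Wt; field_simp
    _ ≤ _ := by gcongr

omit hu in
lemma gag_pt (s : ℝ) (hs : 0 < s) (x h : ℝ) (hh : |h| ≤ 1/2) (h0 : h ≠ 0) :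
    ‖deriv u (x + h) - deriv u x‖ ^ 2 * Wt (2 * (s - 1) + 1) h ≤
      4 * (L ^ (2 * s + 1) * (m ^ 2)⁻¹) * b1 s γ u x (x + h) +
      4 * (L ^ (2 * s + 1) * (m ^ 2)⁻¹) * b1 s γ u (x + h) x +
      (12 * (m ^ 2)⁻¹ * S ^ 2) * (Aav (deriv γ) x h * Wt (2 * (s - 1) + 1) h) +
      (8 * (m ^ 2)⁻¹ * S ^ 2) * (‖deriv γ (x + h) - deriv γ x‖ ^ 2 * Wt (2 * (s - 1) + 1) h) := by
  have hm := G.mpos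
  have ha : 0 < |h| := abs_pos.2 h0
  have hh2 : 0 < h ^ 2 := by positivity
  have hd0 : 0 < ‖γ (x + h) - γ x‖ := lt_of_lt_of_le (by positivity) (G.bl x h hh)
  have k1 := b1_lower (u := u) G s hs x (x + h) h h0 (G.bu x h) hd0
  have k2 := b1_lower (u := u) G s hs (x + h) x h h0 (by rw [norm_sub_rev]; exact G.bu x h)
    (by rw [norm_sub_rev]; exact hd0)
  have N := N_lower G hS x h
  have p3 := Wt_nonneg (2 * (s - 1) + 1) h
  set w := Wt (2 * (s - 1) + 1) h
  have : ‖deriv u (x + h) - deriv u x‖ ^ 2 * w =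
      (h ^ 2 * ‖deriv u (x + h) - deriv u x‖ ^ 2) * ((h ^ 2)⁻¹ * w) := by field_simp
  rw [this]
  have N2 := mul_le_mul_of_nonneg_right N (by positivity : 0 ≤ (h ^ 2)⁻¹ * w)
  refine N2.trans ?_
  have e : 4 * (‖Nn γ u x (x + h)‖ ^ 2 + ‖Nn γ u (x + h) x‖ ^ 2 + (m ^ 2)⁻¹ * S ^ 2 * (h ^ 2 *
      (3 * Aav (deriv γ) x h + 2 * ‖deriv γ (x + h) - deriv γ x‖ ^ 2))) * ((h ^ 2)⁻¹ * w) =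
      4 * (‖Nn γ u x (x + h)‖ ^ 2 * (h ^ 2)⁻¹ * w) + 4 * (‖Nn γ u (x + h) x‖ ^ 2 * (h ^ 2)⁻¹ * w) +
      (12 * (m ^ 2)⁻¹ * S ^ 2) * (Aav (deriv γ) x h * w) +
      (8 * (m ^ 2)⁻¹ * S ^ 2) * (‖deriv γ (x + h) - deriv γ x‖ ^ 2 * w) := by
    field_simp; ring
  rw [e]
  linarith
end

section
variable {n : ℕ} {γ : ℝ → En n} {u : ℝ → En n}

lemma meas_Rop (s : ℝ) (hγ : ContDiff ℝ 1 γ) (hu : ContDiff ℝ 1 u) :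
    Measurable (fun q : ℝ × ℝ => Rop s γ u q.1 q.2) := by
  have c1 := hγ.continuous
  have c2 := hu.continuous
  have c3 : Continuous (deriv γ) := hγ.continuous_deriv le_rfl
  have c4 : Continuous (deriv u) := hu.continuous_deriv le_rfl
  have m1 : Measurable (fun q : ℝ × ℝ => (‖γ q.2 - γ q.1‖ ^ s)⁻¹) :=
    (((Continuous.measurable (by fun_prop)) : Measurable fun q : ℝ × ℝ => ‖γ q.2 - γ q.1‖).pow_const s).inv
  have m2 : Measurable (fun q : ℝ × ℝ => (‖deriv γ q.1‖ ^ 2)⁻¹) :=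
    ((Continuous.measurable (by fun_prop)) : Measurable fun q : ℝ × ℝ => ‖deriv γ q.1‖ ^ 2).inv
  have m3 : Measurable (fun q : ℝ × ℝ => ⟪deriv γ q.1, γ q.2 - γ q.1⟫) :=
    Continuous.measurable (by fun_prop)
  have m4 : Measurable (fun q : ℝ × ℝ => deriv u q.1) := Continuous.measurable (by fun_prop)
  have m5 : Measurable (fun q : ℝ × ℝ => u q.2 - u q.1) := Continuous.measurable (by fun_prop)
  exact m1.smul (m5.sub ((m2.mul m3).smul m4))

lemma meas_muW (hγ : ContDiff ℝ 1 γ) : Measurable (fun q : ℝ × ℝ => muW γ q.1 q.2) := by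
  have c1 := hγ.continuous
  have c3 : Continuous (deriv γ) := hγ.continuous_deriv le_rfl
  have m1 : Measurable (fun q : ℝ × ℝ => ‖deriv γ q.1‖ * ‖deriv γ q.2‖) :=
    Continuous.measurable (by fun_prop)
  have m2 : Measurable (fun q : ℝ × ℝ => ‖γ q.2 - γ q.1‖) :=
    Continuous.measurable (by fun_prop)
  exact m1.div m2

lemma muW_nonneg (γ : ℝ → En n) (x y : ℝ) : 0 ≤ muW γ x y := by unfold muW; positivity

lemma meas_Dg (hγ : ContDiff ℝ 1 γ) (hu : ContDiff ℝ 1 u) : Measurable (Dg γ u) := by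
  have c3 : Continuous (deriv γ) := hγ.continuous_deriv le_rfl
  have c4 : Continuous (deriv u) := hu.continuous_deriv le_rfl
  exact (c3.measurable.norm.inv).smul c4.measurable

lemma meas_b1 (s : ℝ) (hγ : ContDiff ℝ 1 γ) (hu : ContDiff ℝ 1 u) :
    Measurable (fun q : ℝ × ℝ => b1 s γ u q.1 q.2) :=
  ((meas_Rop s hγ hu).norm.pow_const 2).mul (meas_muW hγ)

/-- Extended-valued quadratic first form. -/
def B1E (s : ℝ) (γ u : ℝ → En n) : ℝ≥0∞ :=
  ∫⁻ x in I01, ∫⁻ y in I01, ENNReal.ofReal (b1 s γ u x y)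

lemma b1_per_right (s : ℝ) (hγ : Function.Periodic γ 1) (hu : Function.Periodic u 1) (x y : ℝ) :
    b1 s γ u x (y + 1) = b1 s γ u x y := by
  simp only [b1, Rop, muW, DDg, hγ y, hu y, per_deriv hγ y]

lemma b1_per_left (s : ℝ) (hγ : Function.Periodic γ 1) (hu : Function.Periodic u 1) (x y : ℝ) :
    b1 s γ u (y + 1) x = b1 s γ u y x := by
  simp only [b1, Rop, muW, DDg, hγ y, hu y, per_deriv hγ y, per_deriv hu y]

lemma B1E_eq (s : ℝ) (hγ : Function.Periodic γ 1) (hu : Function.Periodic u 1) :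
    B1E s γ u = ∫⁻ x in I01, ∫⁻ h in Jh, ENNReal.ofReal (b1 s γ u x (x + h)) := by
  refine lintegral_congr fun x => ?_
  rw [lint_shift _ _ x]
  intro y; simp only [b1_per_right s hγ hu]

lemma B1E_eq' (s : ℝ) (hγ : Function.Periodic γ 1) (hu : Function.Periodic u 1)
    (hγ1 : ContDiff ℝ 1 γ) (hu1 : ContDiff ℝ 1 u) :
    B1E s γ u = ∫⁻ x in I01, ∫⁻ h in Jh, ENNReal.ofReal (b1 s γ u (x + h) x) := by
  have : B1E s γ u = ∫⁻ x in I01, ∫⁻ y in I01, ENNReal.ofReal (b1 s γ u y x) := by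
    unfold B1E
    exact lintegral_lintegral_swap (meas_b1 s hγ1 hu1).ennreal_ofReal.aemeasurable
  rw [this]
  refine lintegral_congr fun x => ?_
  rw [lint_shift _ _ x]
  intro y; simp only [b1_per_left s hγ hu]

lemma lemmaA2 (s : ℝ) (hs : 1 < s) (hu : Function.Periodic u 1) (hu1 : ContDiff ℝ 1 u) :
    ∫⁻ x in I01, ∫⁻ h in Jh, ENNReal.ofReal (Aav (deriv u) x h * Wt (2 * (s - 1) + 1) h) ≤
      gagliardoSqE (s - 1) (deriv u) := by
  rw [gag_eq _ _ (per_deriv hu)]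
  exact lintegral_mono fun x => lemmaA _ (by linarith) _ (hu1.continuous_deriv le_rfl) x

lemma dbl_add {f g : ℝ → ℝ → ℝ≥0∞} (hf : Measurable fun q : ℝ × ℝ => f q.1 q.2) :
    ∫⁻ x in I01, ∫⁻ h in Jh, (f x h + g x h) =
      (∫⁻ x in I01, ∫⁻ h in Jh, f x h) + ∫⁻ x in I01, ∫⁻ h in Jh, g x h := by
  rw [← lintegral_add_left]
  · refine lintegral_congr fun x => ?_
    exact lintegral_add_left (f := f x) (hf.comp measurable_prodMk_left) _
  · exact Measurable.lintegral_prod_right' (f := fun q : ℝ × ℝ => f q.1 q.2) hf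

lemma dbl_mul {f : ℝ → ℝ → ℝ} {c : ℝ} (hc : 0 ≤ c) :
    ∫⁻ x in I01, ∫⁻ h in Jh, ENNReal.ofReal (c * f x h) =
      ENNReal.ofReal c * ∫⁻ x in I01, ∫⁻ h in Jh, ENNReal.ofReal (f x h) := by
  simp_rw [ENNReal.ofReal_mul hc, lintegral_const_mul' _ _ ENNReal.ofReal_ne_top]

lemma meas_AW (p : ℝ) {f : ℝ → En n} (hf : Continuous f) :
    Measurable fun q : ℝ × ℝ => Aav f q.1 q.2 * Wt p q.2 :=
  (meas_Aav f hf).mul ((meas_Wt p).comp measurable_snd)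

variable {m L : ℝ} (G : Geo γ m L) (hup : Function.Periodic u 1) (hu : ContDiff ℝ 1 u)
  {S : ℝ} (hS : ∀ x, ‖deriv u x‖ ≤ S)
include G hup hu hS

lemma B1E_upper (s : ℝ) (hs : 1 < s) : B1E s γ u ≤
    ENNReal.ofReal (2 * L ^ 2 * (m ^ (2 * s + 1))⁻¹) * gagliardoSqE (s - 1) (deriv u) +
    ENNReal.ofReal (2 * L ^ 2 * (m ^ (2 * s + 1))⁻¹ * (m ^ 2)⁻¹ * S ^ 2) *
      gagliardoSqE (s - 1) (deriv γ) := by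
  have hm := G.mpos
  have hL := G.Lpos
  have hmp : 0 < m ^ (2 * s + 1) := Real.rpow_pos_of_pos hm _
  rw [B1E_eq s G.per hup]
  calc _ ≤ ∫⁻ x in I01, ∫⁻ h in Jh,
      (ENNReal.ofReal ((2 * L ^ 2 * (m ^ (2 * s + 1))⁻¹) * (Aav (deriv u) x h * Wt (2 * (s - 1) + 1) h)) +
       ENNReal.ofReal ((2 * L ^ 2 * (m ^ (2 * s + 1))⁻¹ * (m ^ 2)⁻¹ * S ^ 2) * (Aav (deriv γ) x h * Wt (2 * (s - 1) + 1) h))) := by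
        refine lintegral_mono fun x => setLIntegral_mono' measJ fun h hh => ?_
        have p1 := Aav_nonneg (deriv u) x h
        have p2 := Aav_nonneg (deriv γ) x h
        have p3 := Wt_nonneg (2 * (s - 1) + 1) h
        rw [← ENNReal.ofReal_add (by positivity) (by positivity)]
        apply ENNReal.ofReal_le_ofReal
        refine (b1_upper G hu hS s (by linarith) x h (Jh_abs hh)).trans (le_of_eq ?_)
        ring
    _ ≤ _ := by
        rw [dbl_add, dbl_mul (by positivity), dbl_mul (by positivity)]
        · gcongr
          · exact lemmaA2 s hs hup hu
          · exact lemmaA2 s hs G.per G.c1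
        · exact ((meas_AW _ (hu.continuous_deriv le_rfl)).const_mul _).ennreal_ofReal

lemma gag_upper (s : ℝ) (hs : 1 < s) : gagliardoSqE (s - 1) (deriv u) ≤
    ENNReal.ofReal (8 * (L ^ (2 * s + 1) * (m ^ 2)⁻¹)) * B1E s γ u +
    ENNReal.ofReal (20 * (m ^ 2)⁻¹ * S ^ 2) * gagliardoSqE (s - 1) (deriv γ) := by
  have hm := G.mpos
  have hL := G.Lpos
  have hLp : 0 < L ^ (2 * s + 1) := Real.rpow_pos_of_pos hL _
  rw [gag_eq _ _ (per_deriv hup)]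
  set K := 4 * (L ^ (2 * s + 1) * (m ^ 2)⁻¹) with hK
  have hK0 : 0 < K := by positivity
  have hmb := meas_b1 s G.c1 hu
  have hcγ : Continuous (deriv γ) := G.c1.continuous_deriv le_rfl
  calc _ ≤ ∫⁻ x in I01, ∫⁻ h in Jh,
      (ENNReal.ofReal (K * b1 s γ u x (x + h)) + (ENNReal.ofReal (K * b1 s γ u (x + h) x) +
       (ENNReal.ofReal ((12 * (m ^ 2)⁻¹ * S ^ 2) * (Aav (deriv γ) x h * Wt (2 * (s - 1) + 1) h)) +
       ENNReal.ofReal ((8 * (m ^ 2)⁻¹ * S ^ 2) * (‖deriv γ (x + h) - deriv γ x‖ ^ 2 * Wt (2 * (s - 1) + 1) h))))) := by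
        refine lintegral_mono fun x => setLIntegral_mono' measJ fun h hh => ?_
        have p1 := b1_nonneg s γ u x (x + h)
        have p4 := b1_nonneg s γ u (x + h) x
        have p2 := Aav_nonneg (deriv γ) x h
        have p3 := Wt_nonneg (2 * (s - 1) + 1) h
        rw [← ENNReal.ofReal_add (by positivity) (by positivity),
          ← ENNReal.ofReal_add (by positivity) (by positivity),
          ← ENNReal.ofReal_add (by positivity) (by positivity)]
        apply ENNReal.ofReal_le_ofReal
        rcases eq_or_ne h 0 with rfl | h0
        · simp only [add_zero, sub_self, norm_zero]
          simp only [add_zero] at p1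
          norm_num
          positivity
        · have := gag_pt G hS s (by linarith) x h (Jh_abs hh) h0
          linarith
    _ = ENNReal.ofReal K * B1E s γ u + (ENNReal.ofReal K * B1E s γ u +
        (ENNReal.ofReal (12 * (m ^ 2)⁻¹ * S ^ 2) * (∫⁻ x in I01, ∫⁻ h in Jh, ENNReal.ofReal (Aav (deriv γ) x h * Wt (2 * (s - 1) + 1) h)) +
        ENNReal.ofReal (8 * (m ^ 2)⁻¹ * S ^ 2) * gagliardoSqE (s - 1) (deriv γ))) := by
        rw [dbl_add, dbl_add, dbl_add, dbl_mul (by positivity), dbl_mul (by positivity),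
          dbl_mul (by positivity), dbl_mul (by positivity), ← B1E_eq s G.per hup,
          ← B1E_eq' s G.per hup G.c1 hu, ← gag_eq _ _ (per_deriv G.per)]
        · exact ((meas_AW _ hcγ).const_mul _).ennreal_ofReal
        · exact ((hmb.comp ((measurable_fst.add measurable_snd).prodMk measurable_fst)).const_mul _).ennreal_ofReal
        · exact ((hmb.comp (measurable_fst.prodMk (measurable_fst.add measurable_snd))).const_mul _).ennreal_ofReal
    _ ≤ ENNReal.ofReal K * B1E s γ u + (ENNReal.ofReal K * B1E s γ u +
        (ENNReal.ofReal (12 * (m ^ 2)⁻¹ * S ^ 2) * gagliardoSqE (s - 1) (deriv γ) +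
        ENNReal.ofReal (8 * (m ^ 2)⁻¹ * S ^ 2) * gagliardoSqE (s - 1) (deriv γ))) := by
        gcongr
        exact lemmaA2 s hs G.per G.c1
    _ = _ := by
        rw [← add_assoc, ← add_mul, ← add_mul, ← ENNReal.ofReal_add (by positivity) (by positivity),
          ← ENNReal.ofReal_add (by positivity) (by positivity)]
        congr 3 <;> ring
end

/-- product measure on the square. -/
def mu2 : Measure (ℝ × ℝ) := (volume.restrict I01).prod (volume.restrict I01)

lemma dbl_real (F : ℝ → ℝ → ℝ) (h0 : ∀ x y, 0 ≤ F x y) (hm : Measurable fun q : ℝ × ℝ => F q.1 q.2)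
    (hfin : ∫⁻ x in I01, ∫⁻ y in I01, ENNReal.ofReal (F x y) < ⊤) :
    Integrable (fun q : ℝ × ℝ => F q.1 q.2) mu2 ∧
      ∫ x in I01, ∫ y in I01, F x y = (∫⁻ x in I01, ∫⁻ y in I01, ENNReal.ofReal (F x y)).toReal := by
  have e : ∫⁻ q, ENNReal.ofReal (F q.1 q.2) ∂mu2 = ∫⁻ x in I01, ∫⁻ y in I01, ENNReal.ofReal (F x y) :=
    lintegral_prod _ hm.ennreal_ofReal.aemeasurable
  have hi : Integrable (fun q : ℝ × ℝ => F q.1 q.2) mu2 := by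
    refine ⟨hm.aestronglyMeasurable, ?_⟩
    rw [hasFiniteIntegral_iff_ofReal (ae_of_all _ fun q => h0 _ _), e]
    exact hfin
  refine ⟨hi, ?_⟩
  have := integral_prod (fun q : ℝ × ℝ => F q.1 q.2) hi
  simp only at this
  rw [← this, ← e]
  exact integral_eq_lintegral_of_nonneg_ae (ae_of_all _ fun q => h0 _ _) hm.aestronglyMeasurable

lemma polar_int {α : Type*} [MeasurableSpace α] {n : ℕ} (μ : Measure α) (φ ψ : α → En n) (w : α → ℝ)
    (hw : ∀ a, 0 ≤ w a) (mφ : Measurable φ) (mψ : Measurable ψ) (mw : Measurable w)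
    (h1 : Integrable (fun a => ‖φ a‖ ^ 2 * w a) μ) (h2 : Integrable (fun a => ‖ψ a‖ ^ 2 * w a) μ) :
    Integrable (fun a => ⟪φ a, ψ a⟫ * w a) μ := by
  refine (h1.add h2).mono' ((mφ.inner mψ).mul mw).aestronglyMeasurable (ae_of_all _ fun a => ?_)
  rw [norm_mul, Real.norm_eq_abs, Real.norm_of_nonneg (hw a)]
  have := abs_real_inner_le_norm (φ a) (ψ a)
  have h3 : |⟪φ a, ψ a⟫| ≤ ‖φ a‖ ^ 2 + ‖ψ a‖ ^ 2 := by
    nlinarith [sq_nonneg (‖φ a‖ - ‖ψ a‖), sq_nonneg (‖φ a‖ + ‖ψ a‖)]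
  have := mul_le_mul_of_nonneg_right h3 (hw a)
  simp only [Pi.add_apply]
  linarith

section
variable {n : ℕ} {s : ℝ} {γ : ℝ → En n} {m L : ℝ}

lemma InHs.bdd {u : ℝ → En n} (hu : InHs s u) : ∃ S : ℝ, 0 < S ∧ ∀ x, ‖deriv u x‖ ≤ S :=
  per_cont_bdd _ (per_deriv hu.1) (hu.2.1.continuous_deriv le_rfl)

lemma B1E_lt_top (G : Geo γ m L) (hγ : InHs s γ) (hs : 1 < s) {u : ℝ → En n} (hu : InHs s u) :
    B1E s γ u < ⊤ := by
  obtain ⟨S, -, hS⟩ := hu.bdd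
  refine (B1E_upper G hu.1 hu.2.1 hS s hs).trans_lt ?_
  exact ENNReal.add_lt_top.2 ⟨ENNReal.mul_lt_top ENNReal.ofReal_lt_top hu.2.2,
    ENNReal.mul_lt_top ENNReal.ofReal_lt_top hγ.2.2⟩

lemma B1_self (G : Geo γ m L) (hγ : InHs s γ) (hs : 1 < s) {u : ℝ → En n} (hu : InHs s u) :
    Integrable (fun q : ℝ × ℝ => b1 s γ u q.1 q.2) mu2 ∧ B1 s γ u u = (B1E s γ u).toReal := by
  have := dbl_real (b1 s γ u) (b1_nonneg s γ u) (meas_b1 s G.c1 hu.2.1) (B1E_lt_top G hγ hs hu)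
  refine ⟨this.1, ?_⟩
  rw [B1E, ← this.2, B1]
  simp only [real_inner_self_eq_norm_sq, b1]

lemma quot_bd (G : Geo γ m L) {u : ℝ → En n} (hup : Function.Periodic u 1) (hu : ContDiff ℝ 1 u)
    {S : ℝ} (hS : ∀ x, ‖deriv u x‖ ≤ S) (x y : ℝ) : ‖u y - u x‖ ≤ (S / m) * ‖γ y - γ x‖ := by
  have hm := G.mpos
  set k := round (y - x)
  set h := y - x - k with hh
  have key : ∀ {f : ℝ → En n}, Function.Periodic f 1 → f y = f (x + h) := by
    intro f hf
    rw [← hf.sub_zsmul_eq k (x := y)]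
    congr 1; rw [zsmul_eq_mul, hh]; ring
  rw [key hup, key G.per]
  have h1 := lip_of_deriv u hu S hS x h
  have h2 := G.bl x h (abs_sub_round (y - x))
  have hS0 : 0 ≤ S := (norm_nonneg _).trans (hS 0)
  calc _ ≤ S * |h| := h1
    _ = (S / m) * (m * |h|) := by field_simp
    _ ≤ _ := by gcongr

/-- weight of the second form -/
def w2 (s : ℝ) (γ : ℝ → En n) (x y : ℝ) : ℝ := ‖Rop s γ γ x y‖ ^ 2 / ‖γ y - γ x‖ ^ 2 * muW γ x y

lemma w2_nonneg (s : ℝ) (γ : ℝ → En n) (x y : ℝ) : 0 ≤ w2 s γ x y := by unfold w2 muW; positivity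

lemma meas_w2 (s : ℝ) (hγ : ContDiff ℝ 1 γ) : Measurable (fun q : ℝ × ℝ => w2 s γ q.1 q.2) := by
  have c1 := hγ.continuous
  have m2 : Measurable (fun q : ℝ × ℝ => ‖γ q.2 - γ q.1‖ ^ 2) :=
    Continuous.measurable (by fun_prop)
  exact (((meas_Rop s hγ hγ).norm.pow_const 2).div m2).mul (meas_muW hγ)

lemma w2_bd (G : Geo γ m L) {u : ℝ → En n} (hup : Function.Periodic u 1) (hu : ContDiff ℝ 1 u)
    {S : ℝ} (hS : ∀ x, ‖deriv u x‖ ≤ S) (x y : ℝ) :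
    ‖u y - u x‖ ^ 2 * w2 s γ x y ≤ (S / m) ^ 2 * b1 s γ γ x y := by
  have h1 := pow_le_pow_left₀ (norm_nonneg _) (quot_bd G hup hu hS x y) 2
  have hmu := muW_nonneg γ x y
  rcases (norm_nonneg (γ y - γ x)).eq_or_lt with h0 | h0
  · have : w2 s γ x y = 0 := by simp [w2, ← h0]
    rw [this, mul_zero]
    have := b1_nonneg s γ γ x y
    positivity
  · calc _ ≤ ((S / m) * ‖γ y - γ x‖) ^ 2 * w2 s γ x y :=
        mul_le_mul_of_nonneg_right h1 (w2_nonneg _ _ _ _)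
      _ = _ := by unfold w2 b1; field_simp

lemma Dg_bd (G : Geo γ m L) {u : ℝ → En n}
    {S : ℝ} (hS : ∀ x, ‖deriv u x‖ ≤ S) (x : ℝ) : ‖Dg γ u x‖ ^ 2 ≤ (S / m) ^ 2 := by
  have hm := G.mpos
  have h1 := G.lo x
  have : ‖Dg γ u x‖ ≤ S / m := by
    rw [Dg, norm_smul, norm_inv, norm_norm, inv_mul_eq_div]
    have := hS x
    have hS0 : 0 ≤ S := (norm_nonneg _).trans (hS 0)
    gcongr
  gcongr

lemma int_w2 (G : Geo γ m L) (hγ : InHs s γ) (hs : 1 < s) {u : ℝ → En n} (hu : InHs s u) :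
    Integrable (fun q : ℝ × ℝ => ‖u q.2 - u q.1‖ ^ 2 * w2 s γ q.1 q.2) mu2 := by
  obtain ⟨S, -, hS⟩ := hu.bdd
  have c := hu.2.1.continuous
  refine ((B1_self G hγ hs hγ).1.const_mul ((S / m) ^ 2)).mono' ?_ (ae_of_all _ fun q => ?_)
  · have m2 : Measurable (fun q : ℝ × ℝ => ‖u q.2 - u q.1‖ ^ 2) :=
      Continuous.measurable (by fun_prop)
    exact (m2.mul (meas_w2 s G.c1)).aestronglyMeasurable
  · rw [Real.norm_of_nonneg (mul_nonneg (sq_nonneg _) (w2_nonneg _ _ _ _))]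
    exact w2_bd G hu.1 hu.2.1 hS _ _

lemma int_w3 (G : Geo γ m L) (hγ : InHs s γ) (hs : 1 < s) {u : ℝ → En n} (hu : InHs s u)
    (pr : ℝ × ℝ → ℝ) (hpr : Measurable pr) :
    Integrable (fun q : ℝ × ℝ => ‖Dg γ u (pr q)‖ ^ 2 * b1 s γ γ q.1 q.2) mu2 := by
  obtain ⟨S, -, hS⟩ := hu.bdd
  refine ((B1_self G hγ hs hγ).1.const_mul ((S / m) ^ 2)).mono' ?_ (ae_of_all _ fun q => ?_)
  · exact ((((meas_Dg G.c1 hu.2.1).comp hpr).norm.pow_const 2).mul (meas_b1 s G.c1 G.c1)).aestronglyMeasurable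
  · rw [Real.norm_of_nonneg (mul_nonneg (sq_nonneg _) (b1_nonneg _ _ _ _ _))]
    exact mul_le_mul_of_nonneg_right (Dg_bd G hS _) (b1_nonneg _ _ _ _ _)

variable (G : Geo γ m L) (hγ : InHs s γ) (hs : 1 < s) {u v : ℝ → En n} (hu : InHs s u) (hv : InHs s v)
include G hγ hs hu hv

lemma B1_prod : Integrable (fun q : ℝ × ℝ => ⟪Rop s γ u q.1 q.2, Rop s γ v q.1 q.2⟫ * muW γ q.1 q.2) mu2 ∧
    B1 s γ u v = ∫ q : ℝ × ℝ, ⟪Rop s γ u q.1 q.2, Rop s γ v q.1 q.2⟫ * muW γ q.1 q.2 ∂mu2 := by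
  have h := polar_int mu2 (fun q : ℝ × ℝ => Rop s γ u q.1 q.2) (fun q => Rop s γ v q.1 q.2)
    (fun q => muW γ q.1 q.2) (fun q => muW_nonneg _ _ _) (meas_Rop s G.c1 hu.2.1) (meas_Rop s G.c1 hv.2.1)
    (meas_muW G.c1) (B1_self G hγ hs hu).1 (B1_self G hγ hs hv).1
  exact ⟨h, (integral_prod _ h).symm⟩

lemma B2_prod : Integrable (fun q : ℝ × ℝ => ⟪u q.2 - u q.1, v q.2 - v q.1⟫ * w2 s γ q.1 q.2) mu2 ∧
    B2 s γ u v = ∫ q : ℝ × ℝ, ⟪u q.2 - u q.1, v q.2 - v q.1⟫ * w2 s γ q.1 q.2 ∂mu2 := by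
  have c1 := hu.2.1.continuous
  have c2 := hv.2.1.continuous
  have h := polar_int mu2 (fun q : ℝ × ℝ => u q.2 - u q.1) (fun q => v q.2 - v q.1)
    (fun q => w2 s γ q.1 q.2) (fun q => w2_nonneg _ _ _ _) (Continuous.measurable (by fun_prop))
    (Continuous.measurable (by fun_prop))
    (meas_w2 s G.c1) (int_w2 G hγ hs hu) (int_w2 G hγ hs hv)
  refine ⟨h, ?_⟩
  rw [mu2, integral_prod _ h, B2]
  refine integral_congr_ae (ae_of_all _ fun x => integral_congr_ae (ae_of_all _ fun y => ?_))
  simp only [w2]; ring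

lemma B3_prod : Integrable (fun q : ℝ × ℝ => (⟪Dg γ u q.1, Dg γ v q.1⟫ + ⟪Dg γ u q.2, Dg γ v q.2⟫) *
      b1 s γ γ q.1 q.2) mu2 ∧
    B3 s γ u v = ∫ q : ℝ × ℝ, (⟪Dg γ u q.1, Dg γ v q.1⟫ + ⟪Dg γ u q.2, Dg γ v q.2⟫) *
      b1 s γ γ q.1 q.2 ∂mu2 := by
  have h1 : ∀ pr : ℝ × ℝ → ℝ, Measurable pr → Integrable (fun q : ℝ × ℝ => ⟪Dg γ u (pr q), Dg γ v (pr q)⟫ *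
      b1 s γ γ q.1 q.2) mu2 := fun pr hpr =>
    polar_int mu2 (fun q : ℝ × ℝ => Dg γ u (pr q)) (fun q => Dg γ v (pr q))
    (fun q => b1 s γ γ q.1 q.2) (fun q => b1_nonneg _ _ _ _ _) ((meas_Dg G.c1 hu.2.1).comp hpr)
    ((meas_Dg G.c1 hv.2.1).comp hpr)
    (meas_b1 s G.c1 G.c1) (int_w3 G hγ hs hu pr hpr) (int_w3 G hγ hs hv pr hpr)
  have h : Integrable (fun q : ℝ × ℝ => (⟪Dg γ u q.1, Dg γ v q.1⟫ + ⟪Dg γ u q.2, Dg γ v q.2⟫) *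
      b1 s γ γ q.1 q.2) mu2 := by
    simp_rw [add_mul]
    exact (h1 _ measurable_fst).add (h1 _ measurable_snd)
  refine ⟨h, ?_⟩
  rw [mu2, integral_prod _ h, B3]
  refine integral_congr_ae (ae_of_all _ fun x => integral_congr_ae (ae_of_all _ fun y => ?_))
  simp only [b1]; ring

omit hγ hs in
lemma L2_int : Integrable (fun x => ⟪u x, v x⟫ * ‖deriv γ x‖) (volume.restrict I01) := by
  have c1 := hu.2.1.continuous
  have c2 := hv.2.1.continuous
  have c3 : Continuous (deriv γ) := G.c1.continuous_deriv le_rfl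
  exact intI (by fun_prop)

omit hγ hs in
lemma H1_int : Integrable (fun x => ⟪Dg γ u x, Dg γ v x⟫ * ‖deriv γ x‖) (volume.restrict I01) := by
  have c1 : Continuous (deriv u) := hu.2.1.continuous_deriv le_rfl
  have c2 : Continuous (deriv v) := hv.2.1.continuous_deriv le_rfl
  have c3 : Continuous (deriv γ) := G.c1.continuous_deriv le_rfl
  have c4 : Continuous (fun x => ‖deriv γ x‖⁻¹) :=
    c3.norm.inv₀ fun x => (G.mpos.trans_le (G.lo x)).ne'
  refine intI ?_
  unfold Dg
  fun_prop
end

lemma Gmet_comm {n : ℕ} (s : ℝ) (γ u v : ℝ → En n) : Gmet s γ u v = Gmet s γ v u := by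
  simp only [Gmet, B1, B2, B3, innerH1g, innerL2g, real_inner_comm]

lemma Gmet_smul {n : ℕ} (s : ℝ) (γ u v : ℝ → En n) (a : ℝ) (hu : ContDiff ℝ 1 u) :
    Gmet s γ (fun x => a • u x) v = a * Gmet s γ u v := by
  have hd : ∀ x, deriv (fun x => a • u x) x = a • deriv u x := fun x =>
    deriv_fun_const_smul a (hu.differentiable one_ne_zero x)
  have e1 : ∀ x y, Rop s γ (fun x => a • u x) x y = a • Rop s γ u x y := by
    intro x y
    simp only [Rop, DDg, hd, ← smul_sub, smul_comm _ a]
  have e2 : ∀ x, Dg γ (fun x => a • u x) x = a • Dg γ u x := by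
    intro x; simp only [Dg, hd, smul_comm _ a]
  have c1 : B1 s γ (fun x => a • u x) v = a * B1 s γ u v := by
    simp only [B1, e1, inner_smul_left, mul_assoc, integral_const_mul, RCLike.conj_to_real]
  have c2 : B2 s γ (fun x => a • u x) v = a * B2 s γ u v := by
    simp only [B2, ← smul_sub, inner_smul_left, RCLike.conj_to_real, ← integral_const_mul]
    congr 1; ext x; congr 1; ext y; ring
  have c3 : B3 s γ (fun x => a • u x) v = a * B3 s γ u v := by
    simp only [B3, e2, inner_smul_left, RCLike.conj_to_real, ← integral_const_mul]
    congr 1; ext x; congr 1; ext y; ring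
  have c4 : innerH1g γ (fun x => a • u x) v = a * innerH1g γ u v := by
    simp only [innerH1g, e2, inner_smul_left, mul_assoc, integral_const_mul, RCLike.conj_to_real]
  have c5 : innerL2g γ (fun x => a • u x) v = a * innerL2g γ u v := by
    simp only [innerL2g, inner_smul_left, mul_assoc, integral_const_mul, RCLike.conj_to_real]
  simp only [Gmet, c1, c2, c3, c4, c5]; ring

lemma gag_add_lt {n : ℕ} (σ : ℝ) (f g : ℝ → En n) (hf : Continuous f)
    (h1 : gagliardoSqE σ f < ⊤) (h2 : gagliardoSqE σ g < ⊤) :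
    gagliardoSqE σ (fun x => f x + g x) < ⊤ := by
  have hmf := meas_gag (2 * σ + 1) f hf
  have : gagliardoSqE σ (fun x => f x + g x) ≤ ENNReal.ofReal 2 * (gagliardoSqE σ f + gagliardoSqE σ g) := by
    unfold gagliardoSqE
    have hm0 : Measurable (fun x => ∫⁻ y in I01, ENNReal.ofReal (‖f y - f x‖ ^ 2 / dT x y ^ (2 * σ + 1))) :=
      Measurable.lintegral_prod_right' hmf
    rw [← lintegral_add_left hm0, ← lintegral_const_mul' _ _ (by simp)]
    refine lintegral_mono fun x => ?_
    simp only
    have hpm : Measurable (fun y : ℝ => (x, y)) := by fun_prop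
    have hmx : Measurable (fun y => ENNReal.ofReal (‖f y - f x‖ ^ 2 / dT x y ^ (2 * σ + 1))) := by
      have := hmf.comp hpm
      simpa only [Function.comp_def] using this
    rw [← lintegral_add_left hmx, ← lintegral_const_mul' _ _ (by simp)]
    refine lintegral_mono fun y => ?_
    have hd := dT_nonneg x y
    rw [← ENNReal.ofReal_add (by positivity) (by positivity), 
      ← ENNReal.ofReal_mul (by norm_num), ← add_div, mul_div_assoc']
    apply ENNReal.ofReal_le_ofReal
    have hp : 0 ≤ dT x y ^ (2 * σ + 1) := by positivity
    refine div_le_div_of_nonneg_right ?_ hp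
    have e : f y + g y - (f x + g x) = (f y - f x) + (g y - g x) := by abel
    rw [e]
    have := norm_add_le (f y - f x) (g y - g x)
    have h6 : ‖(f y - f x) + (g y - g x)‖ ^ 2 ≤ (‖f y - f x‖ + ‖g y - g x‖) ^ 2 := by gcongr
    nlinarith [sq_nonneg (‖f y - f x‖ - ‖g y - g x‖)]
  exact this.trans_lt (ENNReal.mul_lt_top (by simp) (ENNReal.add_lt_top.2 ⟨h1, h2⟩))

lemma InHs.add {n : ℕ} {s : ℝ} {u v : ℝ → En n} (hu : InHs s u) (hv : InHs s v) :
    InHs s (fun x => u x + v x) := by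
  refine ⟨hu.1.add hv.1, hu.2.1.add hv.2.1, ?_⟩
  have hd : deriv (fun x => u x + v x) = fun x => deriv u x + deriv v x := by
    ext1 x
    exact deriv_fun_add (hu.2.1.differentiable one_ne_zero x) (hv.2.1.differentiable one_ne_zero x)
  rw [hd]
  exact gag_add_lt _ _ _ (hu.2.1.continuous_deriv le_rfl) hu.2.2 hv.2.2

lemma gag_smul {n : ℕ} (σ a : ℝ) (f : ℝ → En n) :
    gagliardoSqE σ (fun x => a • f x) = ENNReal.ofReal (a ^ 2) * gagliardoSqE σ f := by
  unfold gagliardoSqE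
  simp_rw [← lintegral_const_mul' _ _ ENNReal.ofReal_ne_top, ← ENNReal.ofReal_mul (sq_nonneg a),
    ← smul_sub, norm_smul, mul_pow, Real.norm_eq_abs, sq_abs, mul_div_assoc]

lemma InHs.smul {n : ℕ} {s : ℝ} {u : ℝ → En n} (a : ℝ) (hu : InHs s u) :
    InHs s (fun x => a • u x) := by
  refine ⟨fun x => by simp only [hu.1 x], ContDiff.const_smul a hu.2.1, ?_⟩
  have hd : deriv (fun x => a • u x) = fun x => a • deriv u x := by
    ext1 x
    exact deriv_fun_const_smul a (hu.2.1.differentiable one_ne_zero x)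
  rw [hd, gag_smul]
  exact ENNReal.mul_lt_top ENNReal.ofReal_lt_top hu.2.2

lemma Gmet_add {n : ℕ} {s : ℝ} {γ : ℝ → En n} {m L : ℝ} (G : Geo γ m L) (hγ : InHs s γ) (hs : 1 < s)
    {u v w : ℝ → En n} (hu : InHs s u) (hv : InHs s v) (hw : InHs s w) :
    Gmet s γ (fun x => u x + v x) w = Gmet s γ u w + Gmet s γ v w := by
  have huv := hu.add hv
  have hd : ∀ x, deriv (fun x => u x + v x) x = deriv u x + deriv v x := fun x =>
    deriv_fun_add (hu.2.1.differentiable one_ne_zero x) (hv.2.1.differentiable one_ne_zero x)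
  have e1 : ∀ x y, Rop s γ (fun x => u x + v x) x y = Rop s γ u x y + Rop s γ v x y := by
    intro x y
    simp only [Rop, DDg, hd, ← smul_add]
    congr 1
    rw [smul_add]; abel
  have e2 : ∀ x, Dg γ (fun x => u x + v x) x = Dg γ u x + Dg γ v x := by
    intro x; simp only [Dg, hd, smul_add]
  have c1 : B1 s γ (fun x => u x + v x) w = B1 s γ u w + B1 s γ v w := by
    rw [(B1_prod G hγ hs huv hw).2, (B1_prod G hγ hs hu hw).2, (B1_prod G hγ hs hv hw).2,
      ← integral_add (B1_prod G hγ hs hu hw).1 (B1_prod G hγ hs hv hw).1]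
    congr 1; ext q; rw [e1, inner_add_left, add_mul]
  have c2 : B2 s γ (fun x => u x + v x) w = B2 s γ u w + B2 s γ v w := by
    rw [(B2_prod G hγ hs huv hw).2, (B2_prod G hγ hs hu hw).2, (B2_prod G hγ hs hv hw).2,
      ← integral_add (B2_prod G hγ hs hu hw).1 (B2_prod G hγ hs hv hw).1]
    congr 1; ext q
    have : u q.2 + v q.2 - (u q.1 + v q.1) = (u q.2 - u q.1) + (v q.2 - v q.1) := by abel
    rw [this, inner_add_left, add_mul]
  have c3 : B3 s γ (fun x => u x + v x) w = B3 s γ u w + B3 s γ v w := by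
    rw [(B3_prod G hγ hs huv hw).2, (B3_prod G hγ hs hu hw).2, (B3_prod G hγ hs hv hw).2,
      ← integral_add (B3_prod G hγ hs hu hw).1 (B3_prod G hγ hs hv hw).1]
    congr 1; ext q; rw [e2, e2, inner_add_left, inner_add_left]; ring
  have c4 : innerH1g γ (fun x => u x + v x) w = innerH1g γ u w + innerH1g γ v w := by
    rw [innerH1g, innerH1g, innerH1g, ← integral_add (H1_int G hu hw) (H1_int G hv hw)]
    congr 1; ext q; rw [e2, inner_add_left, add_mul]
  have c5 : innerL2g γ (fun x => u x + v x) w = innerL2g γ u w + innerL2g γ v w := by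
    rw [innerL2g, innerL2g, innerL2g, ← integral_add (L2_int G hu hw) (L2_int G hv hw)]
    congr 1; ext q; rw [inner_add_left, add_mul]
  simp only [Gmet, c1, c2, c3, c4, c5]; ring

/-- the L2 part -/
def aa {n : ℕ} (u : ℝ → En n) : ℝ := ∫ x in I01, ‖u x‖ ^ 2
/-- the H1 part -/
def bb {n : ℕ} (u : ℝ → En n) : ℝ := ∫ x in I01, ‖deriv u x‖ ^ 2
/-- the Gagliardo part -/
def gg {n : ℕ} (s : ℝ) (u : ℝ → En n) : ℝ := (gagliardoSqE (s - 1) (deriv u)).toReal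

lemma HsNormSq_eq {n : ℕ} (s : ℝ) (u : ℝ → En n) : HsNormSq s u = aa u + bb u + gg s u := rfl

lemma aa_nonneg {n : ℕ} (u : ℝ → En n) : 0 ≤ aa u := integral_nonneg fun _ => by positivity
lemma bb_nonneg {n : ℕ} (u : ℝ → En n) : 0 ≤ bb u := integral_nonneg fun _ => by positivity
lemma gg_nonneg {n : ℕ} (s : ℝ) (u : ℝ → En n) : 0 ≤ gg s u := ENNReal.toReal_nonneg

lemma sup_d {n : ℕ} (s : ℝ) (hs : 3/2 < s) (η : ℝ) (hη : 0 < η) : ∃ C : ℝ, 0 < C ∧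
    ∀ u : ℝ → En n, InHs s u → ∀ x, ‖deriv u x‖ ≤ √(η * gg s u + C * bb u) := by
  obtain ⟨C, hC, h⟩ := morrey (n := n) (s - 1) (by linarith) η hη
  refine ⟨C, hC, fun u hu => per_bound _ (per_deriv hu.1) _ fun x hx => ?_⟩
  exact Real.le_sqrt_of_sq_le (h (deriv u) (hu.2.1.continuous_deriv le_rfl) hu.2.2 x hx)

section
variable {n : ℕ} {s : ℝ} {γ : ℝ → En n} {m L : ℝ} (G : Geo γ m L) (hγ : InHs s γ) (hs : 1 < s)
  {u : ℝ → En n} (hu : InHs s u) {S : ℝ} (hS : ∀ x, ‖deriv u x‖ ≤ S)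
include G hγ hs hu hS

lemma B1_upR : B1 s γ u u ≤ 2*L^2*(m^(2*s+1))⁻¹ * gg s u + 2*L^2*(m^(2*s+1))⁻¹*(m^2)⁻¹*S^2 * gg s γ := by
  have hm := G.mpos
  have hL := G.Lpos
  rw [(B1_self G hγ hs hu).2]
  have h := B1E_upper G hu.1 hu.2.1 hS s hs
  have h2 := ENNReal.toReal_mono (ENNReal.add_ne_top.2 ⟨(ENNReal.mul_lt_top ENNReal.ofReal_lt_top hu.2.2).ne,
    (ENNReal.mul_lt_top ENNReal.ofReal_lt_top hγ.2.2).ne⟩) h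
  rw [ENNReal.toReal_add (ENNReal.mul_lt_top ENNReal.ofReal_lt_top hu.2.2).ne
    (ENNReal.mul_lt_top ENNReal.ofReal_lt_top hγ.2.2).ne, ENNReal.toReal_mul, ENNReal.toReal_mul,
    ENNReal.toReal_ofReal (by positivity), ENNReal.toReal_ofReal (by positivity)] at h2
  exact h2

lemma gg_upR : gg s u ≤ 8*(L^(2*s+1)*(m^2)⁻¹) * B1 s γ u u + 20*(m^2)⁻¹*S^2 * gg s γ := by
  have hm := G.mpos
  have hL := G.Lpos
  rw [(B1_self G hγ hs hu).2]
  have h := gag_upper G hu.1 hu.2.1 hS s hs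
  have t1 := (ENNReal.mul_lt_top (a := ENNReal.ofReal (8*(L^(2*s+1)*(m^2)⁻¹))) ENNReal.ofReal_lt_top (B1E_lt_top G hγ hs hu)).ne
  have t2 := (ENNReal.mul_lt_top (a := ENNReal.ofReal (20*(m^2)⁻¹*S^2)) ENNReal.ofReal_lt_top hγ.2.2).ne
  have h2 := ENNReal.toReal_mono (ENNReal.add_ne_top.2 ⟨t1, t2⟩) h
  rw [ENNReal.toReal_add t1 t2, ENNReal.toReal_mul, ENNReal.toReal_mul,
    ENNReal.toReal_ofReal (by positivity), ENNReal.toReal_ofReal (by positivity)] at h2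
  exact h2

lemma B2_upR : B2 s γ u u ≤ (S / m) ^ 2 * B1 s γ γ γ := by
  have h := B2_prod G hγ hs hu hu
  have h1 := B1_prod G hγ hs hγ hγ
  rw [h.2, h1.2, ← integral_const_mul]
  refine integral_mono h.1 (h1.1.const_mul _) fun q => ?_
  simp only [real_inner_self_eq_norm_sq]
  exact w2_bd G hu.1 hu.2.1 hS _ _

lemma B3_upR : B3 s γ u u ≤ 2 * (S / m) ^ 2 * B1 s γ γ γ := by
  have h := B3_prod G hγ hs hu hu
  have h1 := B1_prod G hγ hs hγ hγ
  rw [h.2, h1.2, ← integral_const_mul]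
  refine integral_mono h.1 (h1.1.const_mul _) fun q => ?_
  simp only [real_inner_self_eq_norm_sq]
  refine mul_le_mul_of_nonneg_right ?_ (b1_nonneg _ _ _ _ _)
  linarith [Dg_bd G hS q.1, Dg_bd G hS q.2]
end

lemma B1_nn {n : ℕ} (s : ℝ) (γ u : ℝ → En n) : 0 ≤ B1 s γ u u := by
  refine integral_nonneg fun x => integral_nonneg fun y => ?_
  simp only [real_inner_self_eq_norm_sq]
  exact mul_nonneg (sq_nonneg _) (muW_nonneg _ _ _)
lemma B2_nn {n : ℕ} (s : ℝ) (γ u : ℝ → En n) : 0 ≤ B2 s γ u u := by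
  refine integral_nonneg fun x => integral_nonneg fun y => ?_
  simp only [real_inner_self_eq_norm_sq]
  have := muW_nonneg γ x y
  positivity
lemma B3_nn {n : ℕ} (s : ℝ) (γ u : ℝ → En n) : 0 ≤ B3 s γ u u := by
  refine integral_nonneg fun x => integral_nonneg fun y => ?_
  simp only [real_inner_self_eq_norm_sq]
  have := muW_nonneg γ x y
  positivity

section
variable {n : ℕ} {s : ℝ} {γ : ℝ → En n} {m L : ℝ} (G : Geo γ m L) {u : ℝ → En n} (hu : InHs s u)
include G hu

lemma L2_up : innerL2g γ u u ≤ L * aa u := by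
  have c := hu.2.1.continuous
  rw [aa, ← integral_const_mul]
  refine integral_mono (L2_int G hu hu) ((intI (by fun_prop)).const_mul _) fun x => ?_
  simp only [real_inner_self_eq_norm_sq]
  rw [mul_comm]
  exact mul_le_mul_of_nonneg_right (G.hi x) (sq_nonneg _)

lemma L2_lo : m * aa u ≤ innerL2g γ u u := by
  have c := hu.2.1.continuous
  rw [aa, ← integral_const_mul]
  refine integral_mono ((intI (by fun_prop)).const_mul _) (L2_int G hu hu) fun x => ?_
  simp only [real_inner_self_eq_norm_sq]
  rw [mul_comm]
  exact mul_le_mul_of_nonneg_left (G.lo x) (sq_nonneg _)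

omit hu in
lemma H1_pt (x : ℝ) : ⟪Dg γ u x, Dg γ u x⟫ * ‖deriv γ x‖ = ‖deriv γ x‖⁻¹ * ‖deriv u x‖ ^ 2 := by
  have := G.mpos.trans_le (G.lo x)
  rw [real_inner_self_eq_norm_sq, Dg, norm_smul, norm_inv, norm_norm]
  field_simp

lemma H1_up : innerH1g γ u u ≤ m⁻¹ * bb u := by
  have c : Continuous (deriv u) := hu.2.1.continuous_deriv le_rfl
  have hm := G.mpos
  rw [bb, ← integral_const_mul]
  refine integral_mono (H1_int G hu hu) ((intI (by fun_prop)).const_mul _) fun x => ?_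
  simp only [H1_pt G]
  have := G.lo x
  gcongr

lemma H1_lo : L⁻¹ * bb u ≤ innerH1g γ u u := by
  have c : Continuous (deriv u) := hu.2.1.continuous_deriv le_rfl
  rw [bb, ← integral_const_mul]
  refine integral_mono ((intI (by fun_prop)).const_mul _) (H1_int G hu hu) fun x => ?_
  simp only [H1_pt G]
  have := G.hi x
  have := G.mpos.trans_le (G.lo x)
  gcongr
end

lemma norm_equiv {n : ℕ} {s : ℝ} (hs : 3/2 < s) {γ : ℝ → En n} {m L : ℝ} (G : Geo γ m L) (hγ : InHs s γ) :
    ∃ c C : ℝ, 0 < c ∧ c ≤ C ∧ ∀ u : ℝ → En n, InHs s u →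
      c * HsNormSq s u ≤ Gmet s γ u u ∧ Gmet s γ u u ≤ C * HsNormSq s u := by
  have hm := G.mpos
  have hL := G.Lpos
  have hs1 : 1 < s := by linarith
  have hgγ := gg_nonneg s γ
  have hBγ := B1_nn s γ γ
  -- upper
  have hup : ∃ C : ℝ, 0 < C ∧ ∀ u : ℝ → En n, InHs s u → Gmet s γ u u ≤ C * HsNormSq s u := by
    obtain ⟨C0, hC0, hsup⟩ := sup_d (n := n) s hs 1 one_pos
    set k1 := 2*L^2*(m^(2*s+1))⁻¹ with hk1
    have hk1p : 0 < k1 := by positivity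
    set k2 := 2 * (k1*(m^2)⁻¹ * gg s γ) + (2*s+3) * ((m^2)⁻¹ * B1 s γ γ γ) with hk2
    have hk2p : 0 ≤ k2 := by positivity
    refine ⟨2 * k1 + k2 * (1 + C0) + m⁻¹ + L, by positivity, fun u hu => ?_⟩
    have ha := aa_nonneg u
    have hb := bb_nonneg u
    have hg := gg_nonneg s u
    set S := √(1 * gg s u + C0 * bb u) with hSd
    have hS2 : S ^ 2 = 1 * gg s u + C0 * bb u := Real.sq_sqrt (by positivity)
    have hS := hsup u hu
    have e1 := B1_upR G hγ hs1 hu hS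
    have e2 := B2_upR G hγ hs1 hu hS
    have e3 := B3_upR G hγ hs1 hu hS
    have e4 := H1_up G hu
    have e5 := L2_up G hu
    have e2' := mul_le_mul_of_nonneg_left e2 (show 0 ≤ 2 * s + 1 by linarith)
    have t : Gmet s γ u u ≤ 2 * k1 * gg s u + k2 * S ^ 2 + m⁻¹ * bb u + L * aa u := by
      have : k2 * S ^ 2 = 2 * (k1 * (m^2)⁻¹ * S^2 * gg s γ) + (2*s+1) * ((S/m)^2 * B1 s γ γ γ) +
        2 * (S/m)^2 * B1 s γ γ γ := by rw [hk2, div_pow]; ring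
      rw [this, Gmet]
      linarith
    rw [hS2] at t
    rw [HsNormSq_eq]
    have hmi : 0 < m⁻¹ := by positivity
    have p1 : 0 ≤ k2 * C0 * gg s u := by positivity
    have p2 : 0 ≤ k2 * C0 * aa u := by positivity
    have p3 : 0 ≤ k2 * bb u := by positivity
    have p4 : 0 ≤ k2 * aa u := by positivity
    have p5 : 0 ≤ k1 * (aa u + bb u) := by positivity
    have p6 : 0 ≤ m⁻¹ * (aa u + gg s u) := by positivity
    have p7 : 0 ≤ L * (bb u + gg s u) := by positivity
    linarith
  have hlo : ∃ c : ℝ, 0 < c ∧ ∀ u : ℝ → En n, InHs s u → c * HsNormSq s u ≤ Gmet s γ u u := by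
    set k := 20*(m^2)⁻¹ * gg s γ with hk
    have hk0 : 0 ≤ k := by positivity
    obtain ⟨C0, hC0, hsup⟩ := sup_d (n := n) s hs (1 / (2 * (k + 1))) (by positivity)
    set K := 8*(L^(2*s+1)*(m^2)⁻¹) with hK
    have hKp : 0 < K := by positivity
    set D := K + (1 + 2 * k * C0) * L + m⁻¹ with hD
    have hDp : 0 < D := by positivity
    refine ⟨D⁻¹, by positivity, fun u hu => ?_⟩
    have ha := aa_nonneg u
    have hb := bb_nonneg u
    have hg := gg_nonneg s u
    set S := √(1 / (2 * (k + 1)) * gg s u + C0 * bb u) with hSd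
    have hS2 : S ^ 2 = 1 / (2 * (k + 1)) * gg s u + C0 * bb u := Real.sq_sqrt (by positivity)
    have hS := hsup u hu
    have e1 := gg_upR G hγ hs1 hu hS
    have e4 := H1_lo G hu
    have e5 := L2_lo G hu
    have f1 := B1_nn s γ u
    have f2 := B2_nn s γ u
    have f3 := B3_nn s γ u
    have f4 : 0 ≤ innerH1g γ u u := le_trans (by positivity) e4
    have f5 : 0 ≤ innerL2g γ u u := le_trans (by positivity) e5
    have q1 : 20*(m^2)⁻¹*S^2 * gg s γ = k * S ^ 2 := by rw [hk]; ring
    have q2 : k * S ^ 2 ≤ gg s u / 2 + k * C0 * bb u := by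
      rw [hS2]
      have : k * (1 / (2 * (k + 1))) ≤ 1 / 2 := by
        rw [mul_one_div, div_le_div_iff₀ (by positivity) (by positivity)]; linarith
      have := mul_le_mul_of_nonneg_right this hg
      linarith
    rw [q1] at e1
    have g1 : gg s u ≤ 2 * K * B1 s γ u u + 2 * k * C0 * bb u := by linarith
    have g2 : bb u ≤ L * innerH1g γ u u := by
      rwa [inv_mul_le_iff₀ hL] at e4
    have g3 : aa u ≤ m⁻¹ * innerL2g γ u u := by
      rwa [← inv_mul_le_iff₀ (by positivity), inv_inv]
    have g4 : HsNormSq s u ≤ K * (2 * B1 s γ u u) + ((1 + 2 * k * C0) * L) * innerH1g γ u u + m⁻¹ * innerL2g γ u u := by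
      have := mul_le_mul_of_nonneg_left g2 (show 0 ≤ 1 + 2 * k * C0 by positivity)
      rw [HsNormSq_eq]; linarith
    have f2' : 0 ≤ (2 * s + 1) * B2 s γ u u := by positivity
    have g5 : 2 * B1 s γ u u + innerH1g γ u u + innerL2g γ u u ≤ Gmet s γ u u := by
      rw [Gmet]; linarith
    rw [inv_mul_le_iff₀ hDp]
    refine le_trans ?_ (mul_le_mul_of_nonneg_left g5 hDp.le)
    refine g4.trans ?_
    have r1 : K ≤ D := by
      have : 0 ≤ (1 + 2 * k * C0) * L + m⁻¹ := by positivity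
      linarith
    have r2 : (1 + 2 * k * C0) * L ≤ D := by
      have : 0 < m⁻¹ := by positivity
      linarith
    have r3 : m⁻¹ ≤ D := by
      have : 0 ≤ (1 + 2 * k * C0) * L := by positivity
      linarith
    have := mul_le_mul_of_nonneg_right r1 (show 0 ≤ 2 * B1 s γ u u by positivity)
    have := mul_le_mul_of_nonneg_right r2 f4
    have := mul_le_mul_of_nonneg_right r3 f5
    linarith
  obtain ⟨C, hC, h1⟩ := hup
  obtain ⟨c, hc, h2⟩ := hlo
  refine ⟨c, max C c, hc, le_max_right _ _, fun u hu => ⟨h2 u hu, (h1 u hu).trans ?_⟩⟩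
  refine mul_le_mul_of_nonneg_right (le_max_left _ _) ?_
  have ha := aa_nonneg u
  have hb := bb_nonneg u
  have hg := gg_nonneg s u
  rw [HsNormSq_eq]; positivity

lemma riesz_abs {V : Type*} [AddCommGroup V] [Module ℝ V] (c : InnerProductSpace.Core ℝ V)
    (hc : ∀ u : ℕ → V, (∀ ε > 0, ∃ N, ∀ k ≥ N, ∀ l ≥ N, c.inner (u k - u l) (u k - u l) < ε) →
      ∃ w, ∀ ε > 0, ∃ N, ∀ k ≥ N, c.inner (u k - w) (u k - w) < ε)
    (ℓ : V →ₗ[ℝ] ℝ) (M : ℝ) (hM : ∀ v, |ℓ v| ≤ M * √(c.inner v v)) :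
    ∃ w, ∀ v, ℓ v = c.inner w v := by
  letI : NormedAddCommGroup V := c.toNormedAddCommGroup
  letI : InnerProductSpace ℝ V := InnerProductSpace.ofCore c.toCore
  have hin : ∀ u v : V, inner ℝ u v = c.inner u v := fun _ _ => rfl
  have hno : ∀ v : V, c.inner v v = ‖v‖ ^ 2 := fun v => by
    rw [← hin, real_inner_self_eq_norm_sq]
  haveI : CompleteSpace V := by
    refine Metric.complete_of_cauchySeq_tendsto fun u hu => ?_
    rw [Metric.cauchySeq_iff] at hu
    obtain ⟨w, hw⟩ := hc u (by
      intro ε hε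
      obtain ⟨N, hN⟩ := hu (√ε) (Real.sqrt_pos.2 hε)
      refine ⟨N, fun k hk l hl => ?_⟩
      have := hN k hk l hl
      rw [dist_eq_norm] at this
      rw [hno]
      exact (Real.lt_sqrt (norm_nonneg _)).1 this)
    refine ⟨w, Metric.tendsto_atTop.2 fun ε hε => ?_⟩
    obtain ⟨N, hN⟩ := hw (ε ^ 2) (by positivity)
    refine ⟨N, fun k hk => ?_⟩
    have := hN k hk
    rw [hno] at this
    rw [dist_eq_norm]
    exact lt_of_pow_lt_pow_left₀ 2 hε.le this
  have hM' : ∀ v, ‖ℓ v‖ ≤ M * ‖v‖ := fun v => by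
    have := hM v
    rwa [hno, Real.sqrt_sq (norm_nonneg _)] at this
  refine ⟨(InnerProductSpace.toDual ℝ V).symm (ℓ.mkContinuous M hM'), fun v => ?_⟩
  rw [← hin, InnerProductSpace.toDual_symm_apply]
  rfl

lemma InHs.sub {n : ℕ} {s : ℝ} {u v : ℝ → En n} (hu : InHs s u) (hv : InHs s v) :
    InHs s (fun x => u x - v x) := by
  simpa [sub_eq_add_neg] using hu.add (hv.smul (-1))

lemma HsNormSq_nonneg {n : ℕ} (s : ℝ) (u : ℝ → En n) : 0 ≤ HsNormSq s u := by
  have ha := aa_nonneg u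
  have hb := bb_nonneg u
  have hg := gg_nonneg s u
  rw [HsNormSq_eq]; positivity

lemma avg_le {n : ℕ} {f : ℝ → En n} (hf : Continuous f) {c : ℝ} (h : ∀ x, ‖f x‖ ^ 2 ≤ c) :
    ∫ x in I01, ‖f x‖ ^ 2 ≤ c := by
  have : ∫ x in I01, ‖f x‖ ^ 2 ≤ ∫ x in I01, c :=
    integral_mono (intI (by fun_prop)) (integrable_const _) h
  simpa using this

lemma sup_all {n : ℕ} (s : ℝ) (hs : 3/2 < s) : ∃ K : ℝ, 0 < K ∧
    ∀ u : ℝ → En n, InHs s u → ∀ x, ‖u x‖ ^ 2 ≤ K * HsNormSq s u ∧ ‖deriv u x‖ ^ 2 ≤ K * HsNormSq s u := by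
  obtain ⟨C, hC, h⟩ := sup_d (n := n) s hs 1 one_pos
  refine ⟨2 + 2 * (1 + C), by positivity, fun u hu => ?_⟩
  have ha := aa_nonneg u
  have hb := bb_nonneg u
  have hg := gg_nonneg s u
  have hS := h u hu
  set S := √(1 * gg s u + C * bb u) with hSd
  have hS2 : S ^ 2 = 1 * gg s u + C * bb u := Real.sq_sqrt (by positivity)
  have hS0 : 0 ≤ S := Real.sqrt_nonneg _
  have cu := hu.2.1.continuous
  have hSN : S ^ 2 ≤ (1 + C) * HsNormSq s u := by
    rw [hS2, HsNormSq_eq]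
    have : 0 ≤ C * (aa u + gg s u) := by positivity
    nlinarith
  have h0 : 0 ≤ HsNormSq s u := HsNormSq_nonneg s u
  have h00 : 0 ≤ (1 + C) * HsNormSq s u := by positivity
  have key : ∀ x ∈ I01, ‖u x‖ ≤ √((2 + 2 * (1 + C)) * HsNormSq s u) := by
    intro x hx
    apply Real.le_sqrt_of_sq_le
    have h1 : ∀ y ∈ I01, ‖u x‖ ^ 2 ≤ 2 * ‖u y‖ ^ 2 + 2 * S ^ 2 := by
      intro y hy
      have l := lip_of_deriv u hu.2.1 S hS y (x - y)
      rw [add_sub_cancel] at l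
      have hxy : |x - y| ≤ 1 := by
        rw [abs_le]; constructor <;> linarith [hx.1, hx.2, hy.1, hy.2]
      have l2 : ‖u x - u y‖ ≤ S := l.trans (by nlinarith)
      have l3 : ‖u x‖ ≤ ‖u y‖ + S := by
        have := norm_sub_norm_le (u x) (u y)
        linarith
      have l4 : ‖u x‖ ^ 2 ≤ (‖u y‖ + S) ^ 2 := by gcongr
      nlinarith [sq_nonneg (‖u y‖ - S)]
    have h2 : ∫ y in I01, ‖u x‖ ^ 2 ≤ ∫ y in I01, (2 * ‖u y‖ ^ 2 + 2 * S ^ 2) := by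
      refine setIntegral_mono_on (integrable_const _) (intI (by fun_prop)) measI h1
    rw [integral_add (intI (by fun_prop)) (integrable_const _), integral_const_mul] at h2
    simp only [integral_const, probReal_univ, one_smul] at h2
    have : aa u ≤ HsNormSq s u := by rw [HsNormSq_eq]; linarith
    unfold aa at this
    linarith
  intro x
  constructor
  · have := per_bound u hu.1 _ key x
    have h3 := pow_le_pow_left₀ (norm_nonneg _) this 2
    rwa [Real.sq_sqrt (by positivity)] at h3
  · have h3 := pow_le_pow_left₀ (norm_nonneg _) (hS x) 2
    linarith

lemma unif_lim {n : ℕ} (f : ℕ → ℝ → En n)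
    (h : ∀ ε > 0, ∃ N, ∀ k ≥ N, ∀ l ≥ N, ∀ x, ‖f k x - f l x‖ < ε) :
    ∃ g, TendstoUniformly f g atTop := by
  have hc : ∀ x, ∃ y, Tendsto (fun k => f k x) atTop (𝓝 y) := fun x =>
    cauchySeq_tendsto_of_complete (Metric.cauchySeq_iff.2 fun ε hε => by
      obtain ⟨N, hN⟩ := h ε hε
      exact ⟨N, fun k hk l hl => by rw [dist_eq_norm]; exact hN k hk l hl x⟩)
  choose g hg using hc
  refine ⟨g, Metric.tendstoUniformly_iff.2 fun ε hε => ?_⟩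
  obtain ⟨N, hN⟩ := h (ε / 2) (by positivity)
  filter_upwards [eventually_ge_atTop N] with k hk x
  have : ‖f k x - g x‖ ≤ ε / 2 := by
    refine le_of_tendsto ((tendsto_const_nhds.sub (hg x)).norm) ?_
    filter_upwards [eventually_ge_atTop N] with l hl
    exact (hN k hk l hl x).le
  rw [dist_comm, dist_eq_norm]
  linarith

lemma gag_mu2 {n : ℕ} (σ : ℝ) (f : ℝ → En n) (hf : Continuous f) :
    gagliardoSqE σ f = ∫⁻ q, ENNReal.ofReal (‖f q.2 - f q.1‖ ^ 2 / dT q.1 q.2 ^ (2 * σ + 1)) ∂mu2 :=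
  (lintegral_prod _ (meas_gag (2 * σ + 1) f hf).aemeasurable).symm

lemma gag_fatou {n : ℕ} (σ : ℝ) (f : ℕ → ℝ → En n) (g : ℝ → En n) (hf : ∀ k, Continuous (f k))
    (hg : Continuous g) (hfg : ∀ x, Tendsto (fun k => f k x) atTop (𝓝 (g x))) (c : ℝ≥0∞) (N : ℕ)
    (hc : ∀ k ≥ N, gagliardoSqE σ (f k) ≤ c) : gagliardoSqE σ g ≤ c := by
  rw [gag_mu2 σ g hg]
  have e : ∀ q : ℝ × ℝ, ENNReal.ofReal (‖g q.2 - g q.1‖ ^ 2 / dT q.1 q.2 ^ (2 * σ + 1)) =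
      liminf (fun k => ENNReal.ofReal (‖f k q.2 - f k q.1‖ ^ 2 / dT q.1 q.2 ^ (2 * σ + 1))) atTop := by
    intro q
    refine (Tendsto.liminf_eq ?_).symm
    refine (ENNReal.continuous_ofReal.tendsto _).comp ?_
    exact ((((hfg q.2).sub (hfg q.1)).norm).pow 2).div_const _
  simp_rw [e]
  refine (lintegral_liminf_le fun k => meas_gag (2 * σ + 1) (f k) (hf k)).trans ?_
  refine liminf_le_of_frequently_le' (Eventually.frequently ?_)
  filter_upwards [eventually_ge_atTop N] with k hk
  rw [← gag_mu2 σ _ (hf k)]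
  exact hc k hk

lemma hs_complete {n : ℕ} (s : ℝ) (hs : 3/2 < s) (u : ℕ → ℝ → En n) (hu : ∀ k, InHs s (u k))
    (hc : ∀ ε > 0, ∃ N, ∀ k ≥ N, ∀ l ≥ N, HsNormSq s (fun x => u k x - u l x) < ε) :
    ∃ w, InHs s w ∧ ∀ ε > 0, ∃ N, ∀ k ≥ N, HsNormSq s (fun x => u k x - w x) < ε := by
  obtain ⟨K, hK, hsup⟩ := sup_all (n := n) s hs
  have hdiff : ∀ k x, HasDerivAt (u k) (deriv (u k) x) x := fun k x =>
    ((hu k).2.1.differentiable one_ne_zero x).hasDerivAt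
  have hdc : ∀ k, Continuous (deriv (u k)) := fun k => (hu k).2.1.continuous_deriv le_rfl
  have hds : ∀ k l, deriv (fun x => u k x - u l x) = fun x => deriv (u k) x - deriv (u l) x :=
    fun k l => funext fun x => ((hdiff k x).fun_sub (hdiff l x)).deriv
  have hsm : ∀ ε > 0, ∃ N, ∀ k ≥ N, ∀ l ≥ N, ∀ x, ‖u k x - u l x‖ < ε ∧
      ‖deriv (u k) x - deriv (u l) x‖ < ε := by
    intro ε hε
    obtain ⟨N, hN⟩ := hc (ε ^ 2 / K) (by positivity)
    refine ⟨N, fun k hk l hl x => ?_⟩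
    have h1 := hsup _ ((hu k).sub (hu l)) x
    have h2 := hN k hk l hl
    rw [lt_div_iff₀ hK] at h2
    rw [hds] at h1
    exact ⟨lt_of_pow_lt_pow_left₀ 2 hε.le (by linarith [h1.1]),
      lt_of_pow_lt_pow_left₀ 2 hε.le (by linarith [h1.2])⟩
  obtain ⟨w, hw⟩ := unif_lim u fun ε hε => by
    obtain ⟨N, hN⟩ := hsm ε hε
    exact ⟨N, fun k hk l hl x => (hN k hk l hl x).1⟩
  obtain ⟨w', hw'⟩ := unif_lim (fun k => deriv (u k)) fun ε hε => by
    obtain ⟨N, hN⟩ := hsm ε hε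
    exact ⟨N, fun k hk l hl x => (hN k hk l hl x).2⟩
  have hwd : ∀ x, HasDerivAt w (w' x) x :=
    hasDerivAt_of_tendstoUniformly hw' (Eventually.of_forall hdiff) fun x => hw.tendsto_at x
  have hde : deriv w = w' := funext fun x => (hwd x).deriv
  have hw'c : Continuous w' := hw'.continuous (Eventually.of_forall hdc).frequently
  have hwc1 : ContDiff ℝ 1 w := by
    rw [contDiff_one_iff_deriv, hde]
    exact ⟨fun x => (hwd x).differentiableAt, hw'c⟩
  have hper : Function.Periodic w 1 := fun x =>
    tendsto_nhds_unique (hw.tendsto_at (x + 1)) (by simpa only [(hu _).1 x] using hw.tendsto_at x)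
  have hgagl : ∀ ε > 0, ∀ N, (∀ k ≥ N, ∀ l ≥ N, HsNormSq s (fun x => u k x - u l x) < ε) →
      ∀ k ≥ N, gagliardoSqE (s - 1) (fun x => deriv (u k) x - w' x) ≤ ENNReal.ofReal ε := by
    intro ε hε N hN k hk
    refine gag_fatou (s - 1) (fun l x => deriv (u k) x - deriv (u l) x) _
      (fun l => (hdc k).sub (hdc l)) ((hdc k).sub hw'c) (fun x => tendsto_const_nhds.sub (hw'.tendsto_at x))
      _ N fun l hl => ?_
    have h1 := hN k hk l hl
    have h2 := ((hu k).sub (hu l)).2.2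
    have h3 : gg s (fun x => u k x - u l x) ≤ ε := by
      rw [HsNormSq_eq] at h1
      linarith [aa_nonneg (fun x => u k x - u l x), bb_nonneg (fun x => u k x - u l x)]
    unfold gg at h3
    rw [hds] at h2 h3
    exact ENNReal.le_ofReal_iff_toReal_le h2.ne hε.le |>.2 h3
  have hwH : InHs s w := by
    refine ⟨hper, hwc1, ?_⟩
    obtain ⟨N, hN⟩ := hc 1 one_pos
    have h1 := (hgagl 1 one_pos N hN N le_rfl).trans_lt ENNReal.ofReal_lt_top
    have h2 := gag_smul (s - 1) (-1) (fun x => deriv (u N) x - w' x)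
    have h3 := gag_add_lt (s - 1) (deriv (u N)) (fun x => (-1 : ℝ) • (deriv (u N) x - w' x)) (hdc N)
      (hu N).2.2 (by rw [h2]; exact ENNReal.mul_lt_top ENNReal.ofReal_lt_top h1)
    have e : (fun x => deriv (u N) x + (-1 : ℝ) • (deriv (u N) x - w' x)) = deriv w := by
      rw [hde]; ext1 x; simp
    rwa [e] at h3
  refine ⟨w, hwH, fun ε hε => ?_⟩
  obtain ⟨N1, hN1⟩ := hc (ε / 4) (by positivity)
  have hδ : 0 < √(ε / 4) := Real.sqrt_pos.2 (by positivity)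
  have hδ2 : √(ε / 4) ^ 2 = ε / 4 := Real.sq_sqrt (by positivity)
  have E1 := Metric.tendstoUniformly_iff.1 hw _ hδ
  have E2 := Metric.tendstoUniformly_iff.1 hw' _ hδ
  obtain ⟨N2, hN2⟩ := eventually_atTop.1 (E1.and E2)
  refine ⟨max N1 N2, fun k hk => ?_⟩
  have hk1 : k ≥ N1 := le_trans (le_max_left _ _) hk
  have hk2 : k ≥ N2 := le_trans (le_max_right _ _) hk
  have hd : deriv (fun x => u k x - w x) = fun x => deriv (u k) x - w' x :=
    funext fun x => ((hdiff k x).fun_sub (hwd x)).deriv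
  have t1 : aa (fun x => u k x - w x) ≤ ε / 4 := by
    refine avg_le ((hu k).2.1.continuous.sub hwc1.continuous) fun x => ?_
    have := (hN2 k hk2).1 x
    rw [dist_comm, dist_eq_norm] at this
    rw [← hδ2]; exact pow_le_pow_left₀ (norm_nonneg _) this.le 2
  have t2 : bb (fun x => u k x - w x) ≤ ε / 4 := by
    unfold bb
    rw [hd]
    refine avg_le ((hdc k).sub hw'c) fun x => ?_
    have := (hN2 k hk2).2 x
    rw [dist_comm, dist_eq_norm] at this
    rw [← hδ2]; exact pow_le_pow_left₀ (norm_nonneg _) this.le 2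
  have t3 : gg s (fun x => u k x - w x) ≤ ε / 4 := by
    unfold gg
    rw [hd]
    exact ENNReal.toReal_le_of_le_ofReal (by positivity) (hgagl _ (by positivity) N1 hN1 k hk1)
  rw [HsNormSq_eq]
  linarith

/-- The space of H^s functions as a submodule. -/
def HsSub (s : ℝ) (n : ℕ) : Submodule ℝ (ℝ → En n) where
  carrier := {u | InHs s u}
  add_mem' hu hv := InHs.add hu hv
  zero_mem' := by
    have hd : deriv (0 : ℝ → En n) = fun _ => 0 := by ext1 x; simp
    refine ⟨fun x => rfl, contDiff_const, ?_⟩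
    rw [hd]; simp [gagliardoSqE]
  smul_mem' a u hu := InHs.smul a hu

lemma zero_of_norm {n : ℕ} (s : ℝ) (hs : 3/2 < s) (u : ℝ → En n) (hu : InHs s u) (h : HsNormSq s u ≤ 0) :
    u = 0 := by
  obtain ⟨K, hK, hsup⟩ := sup_all (n := n) s hs
  ext1 x
  have h1 := (hsup u hu x).1
  have h2 : ‖u x‖ ^ 2 ≤ 0 := h1.trans (by nlinarith)
  have h3 : ‖u x‖ = 0 := by
    have := sq_nonneg ‖u x‖
    exact pow_eq_zero_iff (two_ne_zero) |>.1 (le_antisymm h2 this)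
  simpa using h3

lemma riesz_part {n : ℕ} {s : ℝ} (hs : 3/2 < s) {γ : ℝ → En n} {m L : ℝ} (G : Geo γ m L) (hγ : InHs s γ)
    (ℓ : (ℝ → En n) → ℝ)
    (hadd : ∀ u v : ℝ → En n, InHs s u → InHs s v → ℓ (fun x => u x + v x) = ℓ u + ℓ v)
    (hsmul : ∀ (a : ℝ) (u : ℝ → En n), InHs s u → ℓ (fun x => a • u x) = a * ℓ u)
    (hbd : ∃ M : ℝ, ∀ u : ℝ → En n, InHs s u → |ℓ u| ≤ M * HsNorm s u) :
    ∃! w : ℝ → En n, InHs s w ∧ ∀ v : ℝ → En n, InHs s v → ℓ v = Gmet s γ w v := by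
  have hs1 : 1 < s := by linarith
  obtain ⟨c, C, hc, hcC, heq⟩ := norm_equiv hs G hγ
  have hC : 0 < C := hc.trans_le hcC
  obtain ⟨M, hM⟩ := hbd
  let core : InnerProductSpace.Core ℝ (HsSub s n) :=
    { inner := fun u v => Gmet s γ u.1 v.1
      conj_inner_symm := fun u v => by simpa using Gmet_comm s γ _ _
      re_inner_nonneg := fun u => by
        have := (heq u.1 u.2).1
        have h0 := HsNormSq_nonneg s u.1
        have h1 : 0 ≤ c * HsNormSq s u.1 := by positivity
        simpa using h1.trans this
      add_left := fun u v w => Gmet_add G hγ hs1 u.2 v.2 w.2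
      smul_left := fun u v a => Gmet_smul s γ u.1 v.1 a u.2.2.1
      definite := fun u hu => by
        have := (heq u.1 u.2).1
        have h1 : c * HsNormSq s u.1 ≤ 0 := this.trans (le_of_eq hu)
        have h2 : HsNormSq s u.1 ≤ 0 := by
          by_contra h
          push Not at h
          have : 0 < c * HsNormSq s u.1 := by positivity
          linarith
        exact Subtype.ext (zero_of_norm s hs u.1 u.2 h2) }
  have hcore : ∀ u v : HsSub s n, core.inner u v = Gmet s γ u.1 v.1 := fun _ _ => rfl
  let ℓ' : HsSub s n →ₗ[ℝ] ℝ :=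
    { toFun := fun u => ℓ u.1
      map_add' := fun u v => hadd u.1 v.1 u.2 v.2
      map_smul' := fun a u => hsmul a u.1 u.2 }
  obtain ⟨w, hw⟩ := riesz_abs core (by
    intro u hu
    obtain ⟨w, hw, hlim⟩ := hs_complete s hs (fun k => (u k).1) (fun k => (u k).2) (by
      intro ε hε
      obtain ⟨N, hN⟩ := hu (c * ε) (by positivity)
      refine ⟨N, fun k hk l hl => ?_⟩
      have h1 := hN k hk l hl
      rw [hcore] at h1
      have h2 := (heq _ (u k - u l).2).1
      exact lt_of_mul_lt_mul_left (h2.trans_lt h1) hc.le)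
    refine ⟨⟨w, hw⟩, fun ε hε => ?_⟩
    obtain ⟨N, hN⟩ := hlim (ε / C) (by positivity)
    refine ⟨N, fun k hk => ?_⟩
    have h1 := hN k hk
    rw [lt_div_iff₀ hC, mul_comm] at h1
    rw [hcore]
    exact ((heq _ (u k - (⟨w, hw⟩ : HsSub s n)).2).2).trans_lt h1) ℓ' (|M| * √(c⁻¹)) (by
    intro v
    have h1 := hM v.1 v.2
    have h2 := (heq v.1 v.2).1
    rw [hcore, mul_assoc, ← Real.sqrt_mul (by positivity)]
    refine h1.trans ?_
    refine mul_le_mul (le_abs_self M) ?_ (Real.sqrt_nonneg _) (abs_nonneg M)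
    refine Real.sqrt_le_sqrt ?_
    rw [← inv_mul_le_iff₀ (by positivity), inv_inv]
    exact h2)
  refine ⟨w.1, ⟨w.2, fun v hv => hw ⟨v, hv⟩⟩, ?_⟩
  rintro w₂ ⟨hw₂, h₂⟩
  have hz : Gmet s γ (fun x => w₂ x + (-1 : ℝ) • w.1 x) (fun x => w₂ x + (-1 : ℝ) • w.1 x) = 0 := by
    have hsm := InHs.smul (-1) w.2
    have hd := hw₂.add hsm
    rw [Gmet_add G hγ hs1 hw₂ hsm hd, Gmet_smul s γ _ _ _ w.2.2.1, ← h₂ _ hd,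
      ← hcore w ⟨_, hd⟩, ← hw ⟨_, hd⟩]
    change ℓ _ + -1 * ℓ _ = 0
    ring
  have hd := hw₂.add (InHs.smul (-1) w.2)
  have h1 := (heq _ hd).1
  rw [hz] at h1
  have h3 := zero_of_norm s hs _ hd (by
    by_contra h
    push Not at h
    have : 0 < c * HsNormSq s (fun x => w₂ x + (-1 : ℝ) • w.1 x) := by positivity
    linarith)
  ext1 x
  have := congrFun h3 x
  simp only [neg_smul, one_smul, Pi.zero_apply] at this
  exact add_neg_eq_zero.1 this

/-- `G` is a strong Riemannian metric: for every `γ ∈ 𝓜`, `G_γ` is a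
symmetric bilinear form on `H^s(𝕋,ℝⁿ)` and there are `0 < c ≤ C < ∞` with
`c‖u‖²_{H^s} ≤ G_γ(u,u) ≤ C‖u‖²_{H^s}` for all `u ∈ H^s(𝕋,ℝⁿ)`; consequently the
Riesz map `J_γ u = G_γ(u, ·)` is an isomorphism onto the continuous dual
(every bounded linear functional on `H^s` is uniquely represented by `G_γ`). -/
theorem statement7 (s : ℝ) (hs : s ∈ Set.Ioo (3 / 2 : ℝ) 2) (n : ℕ) (hn : 2 ≤ n)
    (γ : ℝ → En n) (hγ : InM s γ) :
    (∀ u v : ℝ → En n, InHs s u → InHs s v → Gmet s γ u v = Gmet s γ v u) ∧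
    (∀ u v w : ℝ → En n, InHs s u → InHs s v → InHs s w →
      Gmet s γ (fun x => u x + v x) w = Gmet s γ u w + Gmet s γ v w) ∧
    (∀ (a : ℝ) (u v : ℝ → En n), InHs s u → InHs s v →
      Gmet s γ (fun x => a • u x) v = a * Gmet s γ u v) ∧
    (∃ c C : ℝ, 0 < c ∧ c ≤ C ∧ ∀ u : ℝ → En n, InHs s u →
      c * HsNormSq s u ≤ Gmet s γ u u ∧ Gmet s γ u u ≤ C * HsNormSq s u) ∧
    (∀ ℓ : (ℝ → En n) → ℝ,
      (∀ u v : ℝ → En n, InHs s u → InHs s v → ℓ (fun x => u x + v x) = ℓ u + ℓ v) →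
      (∀ (a : ℝ) (u : ℝ → En n), InHs s u → ℓ (fun x => a • u x) = a * ℓ u) →
      (∃ M : ℝ, ∀ u : ℝ → En n, InHs s u → |ℓ u| ≤ M * HsNorm s u) →
      ∃! w : ℝ → En n, InHs s w ∧ ∀ v : ℝ → En n, InHs s v → ℓ v = Gmet s γ w v) := by
  have hs' := hs.1
  have hs1 : 1 < s := by linarith
  obtain ⟨m, L, G⟩ := geo_exists s γ hγ
  exact ⟨fun u v _ _ => Gmet_comm s γ u v,
    fun u v w hu hv hw => Gmet_add G hγ.1 hs1 hu hv hw,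
    fun a u v hu _ => Gmet_smul s γ u v a hu.2.1,
    norm_equiv hs' G hγ.1,
    fun ℓ h1 h2 h3 => riesz_part hs' G hγ.1 ℓ h1 h2 h3⟩
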